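/- arXiv:2003.04153 — 6 statements merged into one kernel-verified Lean document; each statement's English description precedes it below -/
import Mathlib

section
/- For every prime number p with p = 5 or 7 < p ≤ 331, there exist elements A₁, B₁, A₂, B₂, λ, μ of the finite field F_{p²} with p² elements such that: (i) for i = 1, 2 one has 4A_i³ + 27B_i² ≠ 0 and the coefficient of x^{p−1} in (x³ + A_i x + B_i)^{(p−1)/2} ∈ F_{p²}[x] is zero (i.e., the elliptic curves E_i : y² = x³ + A_i x + B_i are supersingular); (ii) μ ≠ 0 and the polynomials f₁(x) = x³ + A₁μ²x + B₁μ³ and f₂(x) = (x−λ)³ + A₂(x−λ) + B₂ of F_{p²}[x] are coprime; and (iii) the coefficients of x^{p−1}, x^{2p−1}, x^{p−2} and x^{2p−2} in (f₁·f₂)^{(p−1)/2} are all zero. (These conditions say precisely that the parameters (A₁,B₁,A₂,B₂,λ,μ,ν=1) define a superspecial Howe curve; hence there exists a superspecial Howe curve in characteristic p for every such p.) -/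
open Polynomial

/-!
Coprimality of `f₁` and `f₂` is automatic. They are separable, so at a common root `r` the factor
`X - r` would divide `H = (f₁ f₂) ^ ((p - 1) / 2)` exactly `p - 1` times, and the `(p - 1)`-st Hasse
derivative of `H` would not vanish at `r`. But `p ∣ k.choose (p - 1)` unless `p ∣ k + 1`, and the
coefficients of `H` at all such `k` vanish, so this Hasse derivative is zero.

One may take `μ = 1` by absorbing the twist into `E₁`. If `p ≡ 5 (mod 6)`, then `f₁ = X ^ 3 - 1` and
`f₂ = X ^ 3 + 1` work, because `(X ^ 6 - 1) ^ n` has only monomials of degree divisible by `6`. For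
the other primes, those with `p ≡ 1 (mod 3)`, a nonzero `λ` can be rescaled to `-1`, and explicit
solutions exist in the image of `ℕ[√2]` in `𝔽_{p²}`. The required coefficients are read off from a
single value of the polynomial at a large integer (Kronecker substitution).
-/

namespace HoweCurve

section Coprimality

variable {p : ℕ} [Fact p.Prime]

theorem dvd_choose_pred {k : ℕ} (hk : ¬ p ∣ k + 1) : p ∣ k.choose (p - 1) := by
  have hp : p.Prime := Fact.out
  have key : (k + 1) * k.choose (p - 1) = (k + 1).choose p * p := by
    simpa only [Nat.sub_add_cancel hp.one_le] using Nat.add_one_mul_choose_eq k (p - 1)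
  exact (hp.dvd_mul.1 (key ▸ Nat.dvd_mul_left p _)).resolve_left hk

theorem hasseDeriv_pred_eq_zero {R : Type*} [Semiring R] [CharP R p] {H : R[X]}
    (hH : ∀ k, p ∣ k + 1 → H.coeff k = 0) : hasseDeriv (p - 1) H = 0 := by
  ext j
  rw [hasseDeriv_coeff, coeff_zero]
  by_cases hj : p ∣ j + (p - 1) + 1
  · rw [hH _ hj, mul_zero]
  · rw [(CharP.cast_eq_zero_iff R p _).2 (dvd_choose_pred hj), zero_mul]

theorem eval_eq_zero_of_hasseDeriv_X_sub_C_pow_mul {R : Type*} [CommRing R] {r : R} {q : R[X]}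
    {m : ℕ} (h : hasseDeriv m ((X - C r) ^ m * q) = 0) : q.eval r = 0 := by
  have taylor_eq : taylor r ((X - C r) ^ m * q) = X ^ m * taylor r q := by
    rw [taylor_mul, taylor_pow, map_sub, taylor_X, taylor_C, add_sub_cancel_right]
  have coeff_eq := coeff_X_pow_mul (taylor r q) m 0
  rwa [← taylor_eq, zero_add, taylor_coeff, h, eval_zero, taylor_coeff_zero, eq_comm] at coeff_eq

theorem exists_eq_X_sub_C_mul_of_separable {R : Type*} [CommRing R] [Nontrivial R] {f : R[X]}
    {r : R} (hf : f.Separable) (hr : f.IsRoot r) :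
    ∃ q : R[X], f = (X - C r) * q ∧ q.eval r ≠ 0 := by
  obtain ⟨q, rfl⟩ := dvd_iff_isRoot.2 hr
  refine ⟨q, rfl, fun hq => hf.eval₂_derivative_ne_zero (RingHom.id R) (x := r) ?_ ?_⟩ <;>
    simp [eval₂_id, hq]

theorem isCoprime_of_coeff_mul_pow_eq_zero {K : Type*} [Field K] [CharP K p] (hp : p ≠ 2)
    {f g : K[X]} (hf : f.Separable) (hg : g.Separable)
    (hfg : ∀ k, p ∣ k + 1 → ((f * g) ^ ((p - 1) / 2)).coeff k = 0) : IsCoprime f g := by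
  have : CharP (AlgebraicClosure K) p := charP_of_injective_algebraMap' K p
  rw [isCoprime_iff_aeval_ne_zero_of_isAlgClosed K (AlgebraicClosure K)]
  by_contra! ⟨r, hfr, hgr⟩
  let ι := algebraMap K (AlgebraicClosure K)
  rw [aeval_def, ← eval_map] at hfr hgr
  obtain ⟨u, hu, hur⟩ := exists_eq_X_sub_C_mul_of_separable (hf.map (f := ι)) hfr
  obtain ⟨v, hv, hvr⟩ := exists_eq_X_sub_C_mul_of_separable (hg.map (f := ι)) hgr
  have map_eq : ((f * g) ^ ((p - 1) / 2)).map ι =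
      (X - C r) ^ (p - 1) * (u * v) ^ ((p - 1) / 2) := by
    have two_mul_half : 2 * ((p - 1) / 2) = p - 1 :=
      Nat.two_mul_div_two_of_even ((Fact.out : p.Prime).even_sub_one hp)
    rw [Polynomial.map_pow, Polynomial.map_mul, hu, hv, mul_mul_mul_comm, mul_pow, ← sq,
      ← pow_mul, two_mul_half]
  have hasse_zero : hasseDeriv (p - 1) (((f * g) ^ ((p - 1) / 2)).map ι) = 0 :=
    hasseDeriv_pred_eq_zero fun k hk => by rw [coeff_map, hfg k hk, map_zero]
  have eval_zero := eval_eq_zero_of_hasseDeriv_X_sub_C_pow_mul (map_eq ▸ hasse_zero)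
  rw [eval_pow, eval_mul] at eval_zero
  exact pow_ne_zero _ (mul_ne_zero hur hvr) eval_zero

end Coprimality

section HoweData

/-- The right-hand side of `y² = x³ + A x + B`, as a function of `x` so that it can stand for the
polynomial (`x = X`), its translates and its values alike. -/
def cubic {S : Type*} [CommSemiring S] (A B x : S) : S := x ^ 3 + A * x + B

theorem map_cubic {S T : Type*} [CommSemiring S] [CommSemiring T] (φ : S →+* T) (A B x : S) :
    φ (cubic A B x) = cubic (φ A) (φ B) (φ x) := by
  simp only [cubic, map_add, map_mul, map_pow]

theorem eval_cubic_C {S : Type*} [CommSemiring S] (A B x : S) (y : S[X]) :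
    (cubic (C A) (C B) y).eval x = cubic A B (y.eval x) := by
  simpa only [coe_evalRingHom, eval_C] using map_cubic (evalRingHom x) (C A) (C B) y

theorem map_cubic_C {S T : Type*} [CommSemiring S] [CommSemiring T] (φ : S →+* T) (A B : S)
    (y : S[X]) : (cubic (C A) (C B) y).map φ = cubic (C (φ A)) (C (φ B)) (y.map φ) := by
  simpa only [coe_mapRingHom, map_C] using map_cubic (mapRingHom φ) (C A) (C B) y

theorem natDegree_cubic_X_sub_C_le {R : Type*} [CommRing R] (A B c : R) :
    (cubic (C A) (C B) (X - C c)).natDegree ≤ 3 := by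
  unfold cubic
  compute_degree

theorem separable_cubic_X_sub_C {R : Type*} [CommRing R] {A B : R}
    (h : IsUnit (4 * A ^ 3 + 27 * B ^ 2)) (c : R) :
    (cubic (C A) (C B) (X - C c)).Separable := by
  obtain ⟨d, hd⟩ := h.exists_left_inv
  have C_mul_disc : C d * (4 * C A ^ 3 + 27 * C B ^ 2) = 1 := by
    simpa only [map_mul, map_add, map_pow, map_ofNat, map_one] using congrArg C hd
  have derivative_eq : derivative (cubic (C A) (C B) (X - C c)) = 3 * (X - C c) ^ 2 + C A := by
    simp only [cubic, derivative_add, derivative_X_sub_C_pow, derivative_C_mul, derivative_X_sub_C,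
      derivative_C, mul_one, add_zero, Nat.cast_ofNat, Nat.reduceSub, map_ofNat]
  refine ⟨C d * (27 * C B - 18 * C A * (X - C c)),
    C d * (6 * C A * (X - C c) ^ 2 - 9 * C B * (X - C c) + 4 * C A ^ 2), ?_⟩
  rw [derivative_eq, cubic]
  linear_combination C_mul_disc

variable {K : Type*} [Field K]

/-- The elliptic curve `y² = x³ + A x + B` is nonsingular and satisfies Deuring's criterion for
supersingularity in characteristic `p`. -/
structure IsSupersingular (p : ℕ) (A B : K) : Prop where
  disc_ne_zero : 4 * A ^ 3 + 27 * B ^ 2 ≠ 0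
  coeff_eq_zero : (cubic (C A) (C B) X ^ ((p - 1) / 2)).coeff (p - 1) = 0

/-- Parameters of a superspecial Howe curve with `μ = ν = 1`. Coprimality of the two cubics is left
out because it is automatic, see `IsSuperspecialHoweData.isCoprime`. -/
structure IsSuperspecialHoweData (p : ℕ) (A₁ B₁ A₂ B₂ lam : K) : Prop where
  supersingular₁ : IsSupersingular p A₁ B₁
  supersingular₂ : IsSupersingular p A₂ B₂
  coeff_eq_zero : ∀ k ∈ [p - 1, 2 * p - 1, p - 2, 2 * p - 2],
    ((cubic (C A₁) (C B₁) X * cubic (C A₂) (C B₂) (X - C lam)) ^ ((p - 1) / 2)).coeff k = 0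

theorem IsSuperspecialHoweData.isCoprime {p : ℕ} [Fact p.Prime] [CharP K p] (hp : p ≠ 2)
    {A₁ B₁ A₂ B₂ lam : K} (h : IsSuperspecialHoweData p A₁ B₁ A₂ B₂ lam) :
    IsCoprime (cubic (C A₁) (C B₁) X) (cubic (C A₂) (C B₂) (X - C lam)) := by
  have separable₁ := separable_cubic_X_sub_C h.supersingular₁.disc_ne_zero.isUnit 0
  have degree₁ := natDegree_cubic_X_sub_C_le A₁ B₁ 0
  rw [C_0, sub_zero] at separable₁ degree₁
  refine isCoprime_of_coeff_mul_pow_eq_zero hp separable₁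
    (separable_cubic_X_sub_C h.supersingular₂.disc_ne_zero.isUnit lam) fun k ⟨m, hm⟩ => ?_
  have degree_le : ((cubic (C A₁) (C B₁) X * cubic (C A₂) (C B₂) (X - C lam)) ^
      ((p - 1) / 2)).natDegree ≤ (p - 1) / 2 * 6 :=
    natDegree_pow_le_of_le _ (natDegree_mul_le_of_le degree₁ (natDegree_cubic_X_sub_C_le _ _ _))
  match m with
  | 0 => lia
  | 1 => exact h.coeff_eq_zero k (by simp [show k = p - 1 by lia])
  | 2 => exact h.coeff_eq_zero k (by simp [show k = 2 * p - 1 by lia])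
  | m + 3 =>
    refine coeff_eq_zero_of_natDegree_lt ?_
    have : p * (m + 3) = p * m + 3 * p := by ring
    lia

end HoweData

section CaseFiveModSix

theorem coeff_X_pow_add_C_pow_eq_zero {R : Type*} [CommSemiring R] (a : R) {d k : ℕ} (n : ℕ)
    (hd : 0 < d) (hk : ¬ d ∣ k) : ((X ^ d + C a) ^ n).coeff k = 0 := by
  have expand_eq : (X ^ d + C a) ^ n = expand R d ((X + C a) ^ n) := by simp
  rw [expand_eq, coeff_expand hd, if_neg hk]

theorem isSuperspecialHoweData_of_mod_six {K : Type*} [Field K] {p : ℕ} [CharP K p]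
    (hp : p % 6 = 5) : IsSuperspecialHoweData p (0 : K) (-1) 0 1 0 := by
  have twentySeven_ne_zero : (27 : K) ≠ 0 := by
    intro h
    have dvd : p ∣ 27 := (CharP.cast_eq_zero_iff K p 27).1 (by exact_mod_cast h)
    have mem : p ∈ Nat.divisors 27 := Nat.mem_divisors.2 ⟨dvd, by norm_num⟩
    have : ∀ q ∈ Nat.divisors 27, q % 6 ≠ 5 := by decide
    exact this p mem hp
  have supersingular {B : K} (hB : B ^ 2 = 1) : IsSupersingular p 0 B := by
    refine ⟨by simpa [hB] using twentySeven_ne_zero, ?_⟩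
    rw [cubic, C_0, zero_mul, add_zero]
    exact coeff_X_pow_add_C_pow_eq_zero B _ three_pos (by lia)
  have mul_eq : cubic (C 0) (C (-1)) X * cubic (C 0) (C 1) (X - C 0) = X ^ 6 + C (-1 : K) := by
    simp only [cubic, map_neg, C_0, C_1]
    ring
  refine ⟨supersingular (by norm_num), supersingular (by norm_num), fun k hk => ?_⟩
  rw [mul_eq]
  refine coeff_X_pow_add_C_pow_eq_zero _ _ (by norm_num) ?_
  simp only [List.mem_cons, List.not_mem_nil, or_false] at hk
  lia

end CaseFiveModSix

section KroneckerSubstitution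

theorem map_eval_natCast_eq_mul_add {R : Type*} [Semiring R] (φ : R →+ ℕ) (F : R[X]) (m : ℕ) :
    φ (F.eval (m : R)) = m * φ (F.divX.eval (m : R)) + φ (F.coeff 0) := by
  conv_lhs => rw [← divX_mul_X_add F]
  rw [eval_add, eval_mul_X, eval_C, map_add, ← (Nat.cast_commute m _).eq, ← nsmul_eq_mul, map_nsmul,
    smul_eq_mul]

theorem map_coeff_eq_digit {R : Type*} [Semiring R] (φ : R →+ ℕ) {b : ℕ} (k : ℕ) (F : R[X])
    (hb : φ (F.eval 1) < b) : φ (F.coeff k) = φ (F.eval (b : R)) / b ^ k % b := by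
  have divX_lt_and_coeff_zero_lt {G : R[X]} (hG : φ (G.eval 1) < b) :
      φ (G.divX.eval 1) < b ∧ φ (G.coeff 0) < b := by
    have eval_one := map_eval_natCast_eq_mul_add φ G 1
    rw [Nat.cast_one, one_mul] at eval_one
    lia
  induction k generalizing F with
  | zero =>
    obtain ⟨-, coeff_zero_lt⟩ := divX_lt_and_coeff_zero_lt hb
    rw [map_eval_natCast_eq_mul_add, pow_zero, Nat.div_one, Nat.mul_add_mod,
      Nat.mod_eq_of_lt coeff_zero_lt]
  | succ k ih =>
    obtain ⟨divX_lt, coeff_zero_lt⟩ := divX_lt_and_coeff_zero_lt hb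
    rw [← coeff_divX, ih F.divX divX_lt, map_eval_natCast_eq_mul_add φ F, pow_succ',
      ← Nat.div_div_eq_div_mul, Nat.mul_add_div (by lia), Nat.div_eq_of_lt coeff_zero_lt, add_zero]

variable {c d : ℕ}

/-- A decidable certificate that `p` divides the coefficient of degree `k` of a polynomial `F` over
a quadratic algebra over `ℕ`, where `F` is given through its values. The coefficients have
nonnegative components and add up to `F 1`, so the components are smaller than the base `b` and
appear as the base-`b` digits of those of `F b`. -/
def DvdKroneckerDigit (p k : ℕ) (F : QuadraticAlgebra ℕ c d → QuadraticAlgebra ℕ c d) : Prop :=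
  let b := (F 1).re + (F 1).im + 1
  p ∣ (F b).re / b ^ k % b ∧ p ∣ (F b).im / b ^ k % b

instance (p k : ℕ) (F : QuadraticAlgebra ℕ c d → QuadraticAlgebra ℕ c d) :
    Decidable (DvdKroneckerDigit p k F) :=
  inferInstanceAs (Decidable (_ ∧ _))

theorem map_eq_re_add_im_mul {S : Type*} [Semiring S] (ψ : QuadraticAlgebra ℕ c d →+* S)
    (z : QuadraticAlgebra ℕ c d) : ψ z = z.re + z.im * ψ QuadraticAlgebra.omega := by
  have z_eq : z = (z.re : QuadraticAlgebra ℕ c d) +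
      z.im * (QuadraticAlgebra.omega : QuadraticAlgebra ℕ c d) := by
    ext <;> simp
  conv_lhs => rw [z_eq]
  simp only [map_add, map_mul, map_natCast]

theorem coeff_map_eq_zero_of_dvdKroneckerDigit {S : Type*} [Semiring S] {p : ℕ} [CharP S p]
    (ψ : QuadraticAlgebra ℕ c d →+* S) {k : ℕ} {F : (QuadraticAlgebra ℕ c d)[X]}
    (hF : DvdKroneckerDigit p k fun x => F.eval x) : (F.map ψ).coeff k = 0 := by
  obtain ⟨dvd_re_digit, dvd_im_digit⟩ := hF
  have dvd_re : p ∣ (F.coeff k).re := by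
    convert dvd_re_digit
    exact map_coeff_eq_digit (QuadraticAlgebra.reₗ c d).toAddMonoidHom k F
      (Nat.lt_succ_of_le (Nat.le_add_right _ _))
  have dvd_im : p ∣ (F.coeff k).im := by
    convert dvd_im_digit
    exact map_coeff_eq_digit (QuadraticAlgebra.imₗ c d).toAddMonoidHom k F
      (Nat.lt_succ_of_le (Nat.le_add_left _ _))
  rw [coeff_map, map_eq_re_add_im_mul, (CharP.cast_eq_zero_iff S p _).2 dvd_re,
    (CharP.cast_eq_zero_iff S p _).2 dvd_im, zero_mul, add_zero]

theorem map_ne_zero_of_not_modEq {S : Type*} [CommRing S] {p : ℕ} [CharP S p]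
    (ψ : QuadraticAlgebra ℕ c 0 →+* S) {z : QuadraticAlgebra ℕ c 0}
    (hz : ¬ z.re ^ 2 ≡ c * z.im ^ 2 [MOD p]) : ψ z ≠ 0 := by
  intro h
  have omega_sq : ψ QuadraticAlgebra.omega ^ 2 = c := by
    rw [← map_pow, sq, QuadraticAlgebra.omega_mul_omega_eq_mk, map_eq_re_add_im_mul]
    simp
  rw [map_eq_re_add_im_mul] at h
  refine hz ((CharP.natCast_eq_natCast S p).1 ?_)
  push_cast
  linear_combination (z.re - z.im * ψ QuadraticAlgebra.omega) * h + z.im ^ 2 * omega_sq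

end KroneckerSubstitution

section Certificates

/-- The semiring `ℕ[√2]`, which maps to every field containing a square root of `2`. -/
abbrev NatSqrtTwo : Type := QuadraticAlgebra ℕ 2 0

theorem nonempty_natSqrtTwo_ringHom (p : ℕ) [Fact p.Prime] :
    Nonempty (NatSqrtTwo →+* GaloisField p 2) := by
  have : Fintype (GaloisField p 2) := Fintype.ofFinite _
  have card_eq : Fintype.card (GaloisField p 2) = p ^ 2 := by
    rw [← Nat.card_eq_fintype_card, GaloisField.card p 2 two_ne_zero]
  obtain ⟨t, ht⟩ : IsSquare (2 : GaloisField p 2) := by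
    rw [FiniteField.isSquare_two_iff, card_eq]
    have : p % 8 < 8 := Nat.mod_lt _ (by norm_num)
    rw [Nat.pow_mod]
    interval_cases p % 8 <;> simp
  exact ⟨(QuadraticAlgebra.lift ⟨t, by rw [← ht]; simp⟩).toRingHom⟩

/-- A decidable certificate for `IsSupersingular` of the image of `(A, B)` in characteristic `p`. -/
def SupersingularCertificate (p : ℕ) (A B : NatSqrtTwo) : Prop :=
  let disc := 4 * A ^ 3 + 27 * B ^ 2
  ¬ disc.re ^ 2 ≡ 2 * disc.im ^ 2 [MOD p] ∧
    DvdKroneckerDigit p (p - 1) fun x => cubic A B x ^ ((p - 1) / 2)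

instance (p : ℕ) (A B : NatSqrtTwo) : Decidable (SupersingularCertificate p A B) :=
  inferInstanceAs (Decidable (_ ∧ _))

/-- A decidable certificate for the vanishing of the Cartier–Manin entries of `f₁ f₂` with
`λ = -1` and `μ = ν = 1`; the sign of `λ` keeps the coefficients of `f₂` in `ℕ[√2]`. -/
def CartierManinCertificate (p : ℕ) (A₁ B₁ A₂ B₂ : NatSqrtTwo) : Prop :=
  ∀ k ∈ [p - 1, 2 * p - 1, p - 2, 2 * p - 2],
    DvdKroneckerDigit p k fun x => (cubic A₁ B₁ x * cubic A₂ B₂ (x + 1)) ^ ((p - 1) / 2)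

instance (p : ℕ) (A₁ B₁ A₂ B₂ : NatSqrtTwo) : Decidable (CartierManinCertificate p A₁ B₁ A₂ B₂) :=
  inferInstanceAs (Decidable (∀ _ ∈ _, _))

variable {K : Type*} [Field K] {p : ℕ} [CharP K p] (ψ : NatSqrtTwo →+* K)

theorem SupersingularCertificate.isSupersingular {A B : NatSqrtTwo}
    (h : SupersingularCertificate p A B) : IsSupersingular p (ψ A) (ψ B) where
  disc_ne_zero := by
    simpa only [map_add, map_mul, map_pow, map_ofNat] using map_ne_zero_of_not_modEq ψ h.1
  coeff_eq_zero := by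
    have map_eq : (cubic (C A) (C B) X ^ ((p - 1) / 2)).map ψ =
        cubic (C (ψ A)) (C (ψ B)) X ^ ((p - 1) / 2) := by
      rw [Polynomial.map_pow, map_cubic_C, map_X]
    rw [← map_eq]
    refine coeff_map_eq_zero_of_dvdKroneckerDigit ψ ?_
    simpa only [eval_pow, eval_cubic_C, eval_X] using h.2

theorem CartierManinCertificate.coeff_eq_zero {A₁ B₁ A₂ B₂ : NatSqrtTwo}
    (h : CartierManinCertificate p A₁ B₁ A₂ B₂) {k : ℕ}
    (hk : k ∈ [p - 1, 2 * p - 1, p - 2, 2 * p - 2]) :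
    ((cubic (C (ψ A₁)) (C (ψ B₁)) X * cubic (C (ψ A₂)) (C (ψ B₂)) (X - C (-1))) ^
      ((p - 1) / 2)).coeff k = 0 := by
  have map_eq : ((cubic (C A₁) (C B₁) X * cubic (C A₂) (C B₂) (X + 1)) ^ ((p - 1) / 2)).map ψ =
      (cubic (C (ψ A₁)) (C (ψ B₁)) X * cubic (C (ψ A₂)) (C (ψ B₂)) (X - C (-1))) ^
        ((p - 1) / 2) := by
    rw [Polynomial.map_pow, Polynomial.map_mul, map_cubic_C, map_cubic_C, Polynomial.map_add,
      map_X, Polynomial.map_one, map_neg, C_1, sub_neg_eq_add]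
  rw [← map_eq]
  refine coeff_map_eq_zero_of_dvdKroneckerDigit ψ ?_
  simpa only [eval_pow, eval_mul, eval_cubic_C, eval_add, eval_X, eval_one] using h k hk

end Certificates

section CaseOneModThree

/-- Rows `(p, A₁, B₁, A₂, B₂)` for the primes `7 < p ≤ 331` with `p ≡ 1 (mod 3)`, found by a search
over the supersingular curves in characteristic `p`, first over `𝔽_p` and, as this fails for
`p = 37`, then over `𝔽_{p²}`. -/
def parameterTable : List (ℕ × NatSqrtTwo × NatSqrtTwo × NatSqrtTwo × NatSqrtTwo) := [
  (13, 1, 9, 12, 7), (19, 2, 0, 14, 0), (31, 1, 6, 20, 14),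
  (37, ⟨6, 6⟩, ⟨31, 7⟩, ⟨6, 31⟩, ⟨6, 7⟩), (43, 1, 0, 22, 25), (61, 2, 24, 44, 53),
  (67, 16, 0, 48, 0), (73, 14, 47, 72, 13), (79, 1, 5, 35, 46), (97, 25, 34, 66, 77),
  (103, 1, 17, 8, 94), (109, 2, 81, 102, 105), (127, 1, 21, 28, 108), (139, 1, 37, 61, 0),
  (151, 1, 0, 129, 71), (157, 3, 60, 101, 51), (163, 55, 90, 116, 0), (181, 1, 105, 22, 165),
  (193, 13, 126, 111, 143), (199, 1, 2, 160, 190), (211, 1, 188, 18, 94), (223, 1, 0, 77, 7),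
  (229, 2, 70, 76, 172), (241, 1, 209, 14, 135), (271, 1, 0, 71, 0), (277, 4, 234, 84, 213),
  (283, 4, 235, 144, 0), (307, 1, 95, 284, 115), (313, 4, 74, 97, 95), (331, 7, 51, 29, 184)]

theorem exists_mem_parameterTable :
    ∀ p < 332, p.Prime → 7 < p → p % 3 = 1 → ∃ row ∈ parameterTable, row.1 = p := by
  decide +kernel

theorem certificates_of_mem_parameterTable : ∀ row ∈ parameterTable,
    match row with
    | (p, A₁, B₁, A₂, B₂) =>
      SupersingularCertificate p A₁ B₁ ∧ SupersingularCertificate p A₂ B₂ ∧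
        CartierManinCertificate p A₁ B₁ A₂ B₂ := by
  decide +kernel

theorem exists_isSuperspecialHoweData_of_mod_three {p : ℕ} [Fact p.Prime] (hp : 7 < p)
    (hle : p ≤ 331) (hmod : p % 3 = 1) :
    ∃ A₁ B₁ A₂ B₂ : GaloisField p 2, IsSuperspecialHoweData p A₁ B₁ A₂ B₂ (-1) := by
  obtain ⟨⟨q, A₁, B₁, A₂, B₂⟩, hrow, rfl⟩ :=
    exists_mem_parameterTable p (by lia) Fact.out hp hmod
  obtain ⟨ψ⟩ := nonempty_natSqrtTwo_ringHom q
  obtain ⟨supersingular₁, supersingular₂, cartierManin⟩ :=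
    certificates_of_mem_parameterTable _ hrow
  exact ⟨ψ A₁, ψ B₁, ψ A₂, ψ B₂, supersingular₁.isSupersingular ψ,
    supersingular₂.isSupersingular ψ, fun _ => cartierManin.coeff_eq_zero ψ⟩

end CaseOneModThree

theorem exists_isSuperspecialHoweData {p : ℕ} [hprime : Fact p.Prime]
    (hp : p % 6 = 5 ∨ 7 < p ∧ p ≤ 331) :
    ∃ A₁ B₁ A₂ B₂ lam : GaloisField p 2, IsSuperspecialHoweData p A₁ B₁ A₂ B₂ lam := by
  have p_odd : p % 2 = 1 := hprime.out.eq_two_or_odd.resolve_left (by lia)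
  have three_not_dvd : ¬ 3 ∣ p := fun h =>
    absurd ((Nat.prime_dvd_prime_iff_eq Nat.prime_three hprime.out).1 h) (by lia)
  by_cases hmod : p % 3 = 1
  · obtain ⟨A₁, B₁, A₂, B₂, h⟩ :=
      exists_isSuperspecialHoweData_of_mod_three (p := p) (by lia) (by lia) hmod
    exact ⟨A₁, B₁, A₂, B₂, -1, h⟩
  · exact ⟨0, -1, 0, 1, 0, isSuperspecialHoweData_of_mod_six (by lia)⟩

end HoweCurve

theorem exists_superspecial_howe_curve_general (p : ℕ) [Fact p.Prime]
    (hp : p % 6 = 5 ∨ (7 < p ∧ p ≤ 331)) :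
    ∃ A₁ B₁ A₂ B₂ lam mu : GaloisField p 2,
      (4 * A₁ ^ 3 + 27 * B₁ ^ 2 ≠ 0) ∧
      (4 * A₂ ^ 3 + 27 * B₂ ^ 2 ≠ 0) ∧
      (((X ^ 3 + C A₁ * X + C B₁ : (GaloisField p 2)[X]) ^ ((p - 1) / 2)).coeff (p - 1) = 0) ∧
      (((X ^ 3 + C A₂ * X + C B₂ : (GaloisField p 2)[X]) ^ ((p - 1) / 2)).coeff (p - 1) = 0) ∧
      mu ≠ 0 ∧
      IsCoprime
        (X ^ 3 + C (A₁ * mu ^ 2) * X + C (B₁ * mu ^ 3) : (GaloisField p 2)[X])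
        ((X - C lam) ^ 3 + C A₂ * (X - C lam) + C B₂) ∧
      ((((X ^ 3 + C (A₁ * mu ^ 2) * X + C (B₁ * mu ^ 3)) *
          ((X - C lam) ^ 3 + C A₂ * (X - C lam) + C B₂) : (GaloisField p 2)[X]) ^
            ((p - 1) / 2)).coeff (p - 1) = 0) ∧
      ((((X ^ 3 + C (A₁ * mu ^ 2) * X + C (B₁ * mu ^ 3)) *
          ((X - C lam) ^ 3 + C A₂ * (X - C lam) + C B₂) : (GaloisField p 2)[X]) ^
            ((p - 1) / 2)).coeff (2 * p - 1) = 0) ∧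
      ((((X ^ 3 + C (A₁ * mu ^ 2) * X + C (B₁ * mu ^ 3)) *
          ((X - C lam) ^ 3 + C A₂ * (X - C lam) + C B₂) : (GaloisField p 2)[X]) ^
            ((p - 1) / 2)).coeff (p - 2) = 0) ∧
      ((((X ^ 3 + C (A₁ * mu ^ 2) * X + C (B₁ * mu ^ 3)) *
          ((X - C lam) ^ 3 + C A₂ * (X - C lam) + C B₂) : (GaloisField p 2)[X]) ^
            ((p - 1) / 2)).coeff (2 * p - 2) = 0) := by
  obtain ⟨A₁, B₁, A₂, B₂, lam, h⟩ := HoweCurve.exists_isSuperspecialHoweData hp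
  have coprime := h.isCoprime (by lia)
  have coeff_eq_zero := h.coeff_eq_zero
  simp only [List.forall_mem_cons, List.not_mem_nil, false_imp_iff, implies_true, and_true]
    at coeff_eq_zero
  refine ⟨A₁, B₁, A₂, B₂, lam, 1, h.supersingular₁.disc_ne_zero, h.supersingular₂.disc_ne_zero,
    h.supersingular₁.coeff_eq_zero, h.supersingular₂.coeff_eq_zero, one_ne_zero, ?_⟩
  simp only [one_pow, mul_one]
  exact ⟨coprime, coeff_eq_zero⟩

/-- **Theorem 1.1** (Kudo–Harashita): for every prime `p` with `p = 5` or `7 < p ≤ 331`,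
there exists a superspecial Howe curve in characteristic `p`.  This is expressed via the
existence of parameters `A₁, B₁, A₂, B₂, λ, μ ∈ 𝔽_{p²}` (with `ν = 1`) such that the two
elliptic curves `y² = x³ + Aᵢx + Bᵢ` are supersingular (Deuring/Cartier–Manin criterion),
`(λ, μ, 1)` is of Howe type, and the four Cartier–Manin entries of the associated genus-2
curve `u² = f₁(x)f₂(x)` vanish. -/
theorem exists_superspecial_howe_curve (p : ℕ) [Fact p.Prime]
    (hp : p = 5 ∨ (7 < p ∧ p ≤ 331)) :
    ∃ A₁ B₁ A₂ B₂ lam mu : GaloisField p 2,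
      (4 * A₁ ^ 3 + 27 * B₁ ^ 2 ≠ 0) ∧
      (4 * A₂ ^ 3 + 27 * B₂ ^ 2 ≠ 0) ∧
      (((X ^ 3 + C A₁ * X + C B₁ : (GaloisField p 2)[X]) ^ ((p - 1) / 2)).coeff (p - 1) = 0) ∧
      (((X ^ 3 + C A₂ * X + C B₂ : (GaloisField p 2)[X]) ^ ((p - 1) / 2)).coeff (p - 1) = 0) ∧
      mu ≠ 0 ∧
      IsCoprime
        (X ^ 3 + C (A₁ * mu ^ 2) * X + C (B₁ * mu ^ 3) : (GaloisField p 2)[X])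
        ((X - C lam) ^ 3 + C A₂ * (X - C lam) + C B₂) ∧
      ((((X ^ 3 + C (A₁ * mu ^ 2) * X + C (B₁ * mu ^ 3)) *
          ((X - C lam) ^ 3 + C A₂ * (X - C lam) + C B₂) : (GaloisField p 2)[X]) ^
            ((p - 1) / 2)).coeff (p - 1) = 0) ∧
      ((((X ^ 3 + C (A₁ * mu ^ 2) * X + C (B₁ * mu ^ 3)) *
          ((X - C lam) ^ 3 + C A₂ * (X - C lam) + C B₂) : (GaloisField p 2)[X]) ^
            ((p - 1) / 2)).coeff (2 * p - 1) = 0) ∧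
      ((((X ^ 3 + C (A₁ * mu ^ 2) * X + C (B₁ * mu ^ 3)) *
          ((X - C lam) ^ 3 + C A₂ * (X - C lam) + C B₂) : (GaloisField p 2)[X]) ^
            ((p - 1) / 2)).coeff (p - 2) = 0) ∧
      ((((X ^ 3 + C (A₁ * mu ^ 2) * X + C (B₁ * mu ^ 3)) *
          ((X - C lam) ^ 3 + C A₂ * (X - C lam) + C B₂) : (GaloisField p 2)[X]) ^
            ((p - 1) / 2)).coeff (2 * p - 2) = 0) := by
  exact exists_superspecial_howe_curve_general p (by lia)
end

section
/- Lemma 2.3(1): Suppose that for i = 1, 2 the coefficient of x^{p−1} in (x³ + A_i x + B_i)^{(p−1)/2} ∈ k[x] is zero (i.e., E₁ and E₂ are supersingular). Then the degree of a = γ_{p−1} ∈ k[λ,μ,ν] in each of the variables λ, μ and ν is at most (3p−5)/2. -/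
/-- The polynomial `f = f₁ · f₂ ∈ k[λ,μ,ν][x]`, where `λ = X 0`, `μ = X 1`, `ν = X 2` are
indeterminates, `f₁(x) = x³ + A₁μ²x + B₁μ³` and `f₂(x) = (x−λ)³ + A₂ν²(x−λ) + B₂ν³`. -/
noncomputable def howeF {k : Type*} [CommRing k] (A₁ B₁ A₂ B₂ : k) :
    Polynomial (MvPolynomial (Fin 3) k) :=
  (Polynomial.X ^ 3
      + Polynomial.C (MvPolynomial.C A₁ * MvPolynomial.X 1 ^ 2) * Polynomial.X
      + Polynomial.C (MvPolynomial.C B₁ * MvPolynomial.X 1 ^ 3)) *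
  ((Polynomial.X - Polynomial.C (MvPolynomial.X 0)) ^ 3
      + Polynomial.C (MvPolynomial.C A₂ * MvPolynomial.X 2 ^ 2)
          * (Polynomial.X - Polynomial.C (MvPolynomial.X 0))
      + Polynomial.C (MvPolynomial.C B₂ * MvPolynomial.X 2 ^ 3))

/-- `γ_i ∈ k[λ,μ,ν]`, the coefficient of `x^i` in `f^((p−1)/2)`. -/
noncomputable def howeGamma {k : Type*} [CommRing k] (A₁ B₁ A₂ B₂ : k) (p i : ℕ) :
    MvPolynomial (Fin 3) k :=
  ((howeF A₁ B₁ A₂ B₂) ^ ((p - 1) / 2)).coeff i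

/-! Write `g_i = (x³ + A_i x + B_i)^((p-1)/2)`, of degree `d = 3(p-1)/2`. Multiplying the roots of
`g₁` by `μ`, multiplying those of `g₂` by `ν` and shifting the latter by `λ` gives two polynomials
whose product is `f^((p-1)/2)`. The coefficient of `x^i` in the first is a constant times `μ^(d-i)`,
and that of `x^j` in the second does not involve `μ` and has degree at most `d-j` in `λ` and in `ν`.
Hence, in the sum over `i + j = p-1` that gives `γ_{p-1}`, all terms with `i, j ≥ 1` have degree at
most `d-1` in each variable. The term with `j = 0` vanishes because `E₁` is supersingular. In the
term with `i = 0` the second factor is a value of the `(p-1)`-st Hasse derivative of the scaled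
`g₂`; this derivative is zero because `E₂` is supersingular, `p` divides `n.choose (p-1)` for
`p ≤ n ≤ 2p-2`, and `d < 2p-1`. -/

open Polynomial

theorem hasseDeriv_pred_prime_eq_zero {R : Type*} [Semiring R] {p : ℕ} [CharP R p]
    (hp : p.Prime) {f : R[X]} (hdeg : f.natDegree < 2 * p - 1) (hcoeff : f.coeff (p - 1) = 0) :
    hasseDeriv (p - 1) f = 0 := by
  ext i
  rw [hasseDeriv_coeff, coeff_zero]
  rcases Nat.eq_zero_or_pos i with rfl | hi
  · rw [zero_add, hcoeff, mul_zero]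
  rcases lt_or_ge i p with hip | hip
  · have hdvd : p ∣ (i + (p - 1)).choose (p - 1) := by
      rw [add_comm]
      exact hp.dvd_choose_add (Nat.pred_lt hp.ne_zero) hip (by omega)
    rw [(CharP.cast_eq_zero_iff R p _).2 hdvd, zero_mul]
  · rw [coeff_eq_zero_of_natDegree_lt (by omega), mul_zero]

theorem coeff_taylor_scaleRoots_pred_prime_eq_zero {σ R : Type*} [CommSemiring R] {p : ℕ}
    [CharP R p] (hp : p.Prime) {f : R[X]} (hdeg : f.natDegree < 2 * p - 1)
    (hcoeff : f.coeff (p - 1) = 0) (r t : MvPolynomial σ R) :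
    (taylor r ((f.map MvPolynomial.C).scaleRoots t)).coeff (p - 1) = 0 := by
  rw [taylor_coeff, hasseDeriv_pred_prime_eq_zero hp, eval_zero]
  · rw [natDegree_scaleRoots]
    exact natDegree_map_le.trans_lt hdeg
  · rw [coeff_scaleRoots, coeff_map, hcoeff, map_zero, zero_mul]

section DegreeOf

variable {σ R : Type*} [CommSemiring R]

theorem degreeOf_X_le_one (s t : σ) : (MvPolynomial.X t : MvPolynomial σ R).degreeOf s ≤ 1 := by
  rcases subsingleton_or_nontrivial R with _ | _
  · simp [Subsingleton.elim (MvPolynomial.X t : MvPolynomial σ R) 0]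
  · classical
    rw [MvPolynomial.degreeOf_X]
    split_ifs <;> decide

theorem degreeOf_coeff_scaleRoots_map_C_le (f : R[X]) (r : MvPolynomial σ R) (s : σ) (i : ℕ) :
    (((f.map MvPolynomial.C).scaleRoots r).coeff i).degreeOf s ≤
      (f.natDegree - i) * r.degreeOf s := by
  rw [coeff_scaleRoots, coeff_map, natDegree_map_eq_of_injective (MvPolynomial.C_injective σ R)]
  exact (MvPolynomial.degreeOf_C_mul_le _ _ _).trans (MvPolynomial.degreeOf_pow_le _ _ _)

theorem degreeOf_coeff_taylor_le {F : (MvPolynomial σ R)[X]} {r : MvPolynomial σ R} {s : σ}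
    {d e : ℕ} (hdeg : F.natDegree ≤ d) (hF : ∀ i, (F.coeff i).degreeOf s ≤ (d - i) * e)
    (hr : r.degreeOf s ≤ e) (n : ℕ) :
    ((taylor r F).coeff n).degreeOf s ≤ (d - n) * e := by
  rw [taylor_coeff, eval_eq_sum_range]
  refine (MvPolynomial.degreeOf_sum_le _ _ _).trans (Finset.sup_le fun i hi ↦ ?_)
  have hi_le : i ≤ d - n := by
    have := natDegree_hasseDeriv_le F n
    rw [Finset.mem_range] at hi
    omega
  rw [hasseDeriv_coeff, ← map_natCast MvPolynomial.C, mul_assoc]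
  calc _ ≤ (F.coeff (i + n) * r ^ i).degreeOf s := MvPolynomial.degreeOf_C_mul_le _ _ _
    _ ≤ (F.coeff (i + n)).degreeOf s + (r ^ i).degreeOf s := MvPolynomial.degreeOf_mul_le _ _ _
    _ ≤ (d - (i + n)) * e + i * e :=
      add_le_add (hF _) ((MvPolynomial.degreeOf_pow_le _ _ _).trans (Nat.mul_le_mul_left i hr))
    _ = (d - n) * e := by rw [← add_mul]; congr 1; omega

theorem degreeOf_coeff_taylor_scaleRoots_map_C_le (f : R[X]) (r t : MvPolynomial σ R) (s : σ)
    (i : ℕ) :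
    ((taylor r ((f.map MvPolynomial.C).scaleRoots t)).coeff i).degreeOf s ≤
      (f.natDegree - i) * max (r.degreeOf s) (t.degreeOf s) := by
  refine degreeOf_coeff_taylor_le ?_ (fun j ↦ ?_) (le_max_left _ _) i
  · rw [natDegree_scaleRoots]
    exact natDegree_map_le
  · exact (degreeOf_coeff_scaleRoots_map_C_le f t s j).trans
      (Nat.mul_le_mul_left _ (le_max_right _ _))

end DegreeOf

section ScaledProduct

variable {σ R : Type*} [CommRing R]

theorem degreeOf_coeff_scaleRoots_mul_coeff_taylor_le (f g : R[X]) {l m n : σ}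
    (hml : m ≠ l) (hmn : m ≠ n) (s : σ) (i j : ℕ) :
    (((f.map MvPolynomial.C).scaleRoots (MvPolynomial.X m)).coeff i *
      (taylor (-MvPolynomial.X l)
        ((g.map MvPolynomial.C).scaleRoots (MvPolynomial.X n))).coeff j).degreeOf s ≤
      max (f.natDegree - i) (g.natDegree - j) := by
  have hf := degreeOf_coeff_scaleRoots_map_C_le f (MvPolynomial.X m) s i
  have hg :=
    degreeOf_coeff_taylor_scaleRoots_map_C_le g (-MvPolynomial.X l) (MvPolynomial.X n) s j
  rw [MvPolynomial.degreeOf_neg] at hg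
  refine (MvPolynomial.degreeOf_mul_le _ _ _).trans ((add_le_add hf hg).trans ?_)
  rcases eq_or_ne s m with rfl | hsm
  · rw [MvPolynomial.degreeOf_X_of_ne hml, MvPolynomial.degreeOf_X_of_ne hmn, max_self, mul_zero,
      add_zero]
    exact (mul_le_of_le_one_right (Nat.zero_le _) (degreeOf_X_le_one s s)).trans (le_max_left _ _)
  · rw [MvPolynomial.degreeOf_X_of_ne hsm, mul_zero, zero_add]
    exact (mul_le_of_le_one_right (Nat.zero_le _)
      (max_le (degreeOf_X_le_one s l) (degreeOf_X_le_one s n))).trans (le_max_right _ _)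

theorem degreeOf_coeff_pred_prime_scaleRoots_mul_taylor_le {p : ℕ} [CharP R p] (hp : p.Prime)
    {f g : R[X]} (hg_deg : g.natDegree < 2 * p - 1) (hf_coeff : f.coeff (p - 1) = 0)
    (hg_coeff : g.coeff (p - 1) = 0) {l m n : σ} (hml : m ≠ l) (hmn : m ≠ n) (s : σ) :
    (((f.map MvPolynomial.C).scaleRoots (MvPolynomial.X m) *
      taylor (-MvPolynomial.X l)
        ((g.map MvPolynomial.C).scaleRoots (MvPolynomial.X n))).coeff (p - 1)).degreeOf s ≤
      max f.natDegree g.natDegree - 1 := by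
  rw [coeff_mul]
  refine (MvPolynomial.degreeOf_sum_le _ _ _).trans (Finset.sup_le fun ⟨i, j⟩ hij ↦ ?_)
  replace hij : i + j = p - 1 := Finset.HasAntidiagonal.mem_antidiagonal.1 hij
  rcases Nat.eq_zero_or_pos i with rfl | hi
  · obtain rfl : j = p - 1 := by omega
    simp [coeff_taylor_scaleRoots_pred_prime_eq_zero hp hg_deg hg_coeff]
  rcases Nat.eq_zero_or_pos j with rfl | hj
  · obtain rfl : i = p - 1 := by omega
    simp [hf_coeff]
  exact (degreeOf_coeff_scaleRoots_mul_coeff_taylor_le f g hml hmn s i j).trans (by omega)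

end ScaledProduct

section ShortCubic

variable {R : Type*} [CommSemiring R]

/-- The cubic `x³ + A x + B` of the short Weierstrass equation `y² = x³ + A x + B`. Scaling its
roots gives the first factor of `howeF`; scaling and then translating them gives the second. -/
noncomputable def shortCubic (A B : R) : R[X] :=
  X ^ 3 + C A * X + C B

theorem isMonicOfDegree_shortCubic [Nontrivial R] (A B : R) :
    IsMonicOfDegree (shortCubic A B) 3 := by
  rw [isMonicOfDegree_iff, shortCubic]
  constructor
  · compute_degree
  · simp

theorem map_shortCubic {S : Type*} [CommSemiring S] (φ : R →+* S) (A B : R) :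
    (shortCubic A B).map φ = shortCubic (φ A) (φ B) := by
  simp [shortCubic]

theorem scaleRoots_shortCubic (A B t : R) :
    (shortCubic A B).scaleRoots t = shortCubic (A * t ^ 2) (B * t ^ 3) := by
  nontriviality R
  ext i
  rw [coeff_scaleRoots, (isMonicOfDegree_shortCubic A B).natDegree_eq]
  rcases i with _ | _ | _ | _ | i <;>
    simp [shortCubic, coeff_X, coeff_C, -map_pow]

theorem scaleRoots_map_shortCubic_pow {σ : Type*} (A B : R)
    (t : MvPolynomial σ R) (m : ℕ) :
    ((shortCubic A B ^ m).map MvPolynomial.C).scaleRoots t =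
      shortCubic (MvPolynomial.C A * t ^ 2) (MvPolynomial.C B * t ^ 3) ^ m := by
  nontriviality R
  rw [Polynomial.map_pow, map_shortCubic, pow_scaleRoots', scaleRoots_shortCubic]
  rw [(isMonicOfDegree_shortCubic _ _).leadingCoeff_eq, one_pow]
  exact one_ne_zero

end ShortCubic

theorem howeF_pow_eq {R : Type*} [CommRing R] (A₁ B₁ A₂ B₂ : R) (m : ℕ) :
    howeF A₁ B₁ A₂ B₂ ^ m =
      ((shortCubic A₁ B₁ ^ m).map MvPolynomial.C).scaleRoots (MvPolynomial.X 1) *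
        taylor (-MvPolynomial.X 0)
          (((shortCubic A₂ B₂ ^ m).map MvPolynomial.C).scaleRoots (MvPolynomial.X 2)) := by
  rw [scaleRoots_map_shortCubic_pow, scaleRoots_map_shortCubic_pow, taylor_pow, ← mul_pow]
  simp only [howeF, shortCubic, map_add, taylor_mul, taylor_X_pow, taylor_X, taylor_C, map_neg,
    ← sub_eq_add_neg]

theorem degree_a_le_general {p : ℕ} (hp : p.Prime) (hp2 : p ≠ 2) {k : Type*} [CommRing k]
    [CharP k p] {A₁ B₁ A₂ B₂ : k}
    (hss₁ : (shortCubic A₁ B₁ ^ ((p - 1) / 2)).coeff (p - 1) = 0)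
    (hss₂ : (shortCubic A₂ B₂ ^ ((p - 1) / 2)).coeff (p - 1) = 0) (j : Fin 3) :
    (howeGamma A₁ B₁ A₂ B₂ p (p - 1)).degreeOf j ≤ (3 * p - 5) / 2 := by
  have : Nontrivial k := CharP.nontrivial_of_char_ne_one hp.ne_one
  have hnatDegree (A B : k) :
      (shortCubic A B ^ ((p - 1) / 2)).natDegree = 3 * ((p - 1) / 2) :=
    ((isMonicOfDegree_shortCubic A B).pow _).natDegree_eq
  obtain ⟨q, hq⟩ := hp.odd_of_ne_two hp2
  have hdeg : (shortCubic A₂ B₂ ^ ((p - 1) / 2)).natDegree < 2 * p - 1 := by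
    rw [hnatDegree]
    omega
  have hle := degreeOf_coeff_pred_prime_scaleRoots_mul_taylor_le hp hdeg hss₁ hss₂
    (l := (0 : Fin 3)) (m := 1) (n := 2) (by decide) (by decide) j
  rw [hnatDegree, hnatDegree, max_self, ← howeF_pow_eq] at hle
  exact hle.trans (by omega)

/-- **Lemma 2.3(1)**: if `E₁` and `E₂` are supersingular, then the degree of
`a = γ_{p−1}` in each of the variables `λ, μ, ν` is at most `(3p−5)/2`. -/
theorem degree_a_le (p : ℕ) (hp : p.Prime) (hp3 : 3 < p)
    (k : Type*) [Field k] [CharP k p] (A₁ B₁ A₂ B₂ : k)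
    (hΔ₁ : 4 * A₁ ^ 3 + 27 * B₁ ^ 2 ≠ 0) (hΔ₂ : 4 * A₂ ^ 3 + 27 * B₂ ^ 2 ≠ 0)
    (hss₁ : ((Polynomial.X ^ 3 + Polynomial.C A₁ * Polynomial.X + Polynomial.C B₁ :
        Polynomial k) ^ ((p - 1) / 2)).coeff (p - 1) = 0)
    (hss₂ : ((Polynomial.X ^ 3 + Polynomial.C A₂ * Polynomial.X + Polynomial.C B₂ :
        Polynomial k) ^ ((p - 1) / 2)).coeff (p - 1) = 0) :
    ∀ j : Fin 3,
      MvPolynomial.degreeOf j (howeGamma A₁ B₁ A₂ B₂ p (p - 1)) ≤ (3 * p - 5) / 2 := by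
  exact degree_a_le_general hp (by omega) hss₁ hss₂
end

section
/- Lemma 2.3(2): Suppose that for i = 1, 2 the coefficient of x^{p−1} in (x³ + A_i x + B_i)^{(p−1)/2} ∈ k[x] is zero (i.e., E₁ and E₂ are supersingular). Then the degree of b = γ_{2p−1} ∈ k[λ,μ,ν] in the variable λ is at most (p−5)/2, and its degrees in the variables μ and ν are each at most p−2. -/
/-!
Give `x`, `λ`, `μ`, `ν` weight `1`. Then `f` is homogeneous of degree `6`, so `γ_{2p−1}` is
homogeneous of degree `3(p−1) − (2p−1) = p − 2`; this bounds its degrees in `μ` and `ν`.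

For the degree in `λ`, write `P`, `Q` for the two cubics raised to the power `(p−1)/2`. The
coefficient of `x^n` in `Q(x − λ)` is the Hasse derivative `Q^[n](−λ)`, and `γ_{2p−1}` collects the
products of the coefficient `i` of `P` with `Q^[n](−λ)` where `i + n = 2p − 1`. If `n ≥ p`, then
supersingularity of `E₁` rules out `n = p`, and `deg Q^[n] ≤ deg Q − (p + 1)`. If `n < p`, the
binomials `choose j n` with `p ≤ j < p + n` vanish in characteristic `p` and supersingularity of
`E₂` rules out `j = p − 1`, so `deg Q^[n] ≤ p − 2 − n = i − (p + 1)`.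
-/

open Polynomial

section HasseDeriv

variable {R : Type*} [Semiring R] {Q : R[X]} {n : ℕ}

lemma natDegree_hasseDeriv_le_of_charP {p : ℕ} [CharP R p] (hp : p.Prime) (hn : n < p)
    (hQ : Q.natDegree < p + n) (hQp : Q.coeff (p - 1) = 0) :
    (hasseDeriv n Q).natDegree ≤ p - 2 - n := by
  refine natDegree_le_iff_coeff_eq_zero.mpr fun t ht ↦ ?_
  rw [hasseDeriv_coeff]
  obtain hpt | htp := le_or_gt p t
  · rw [coeff_eq_zero_of_natDegree_lt (by omega), mul_zero]
  obtain heq | hle : t + n = p - 1 ∨ p ≤ t + n := by omega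
  · rw [heq, hQp, mul_zero]
  · rw [(CharP.cast_eq_zero_iff R p _).mpr (hp.dvd_choose hn (by omega) hle), zero_mul]

lemma coeff_taylor_eq_sum_range (r : R) :
    (taylor r Q).coeff n =
      ∑ t ∈ Finset.range (Q.natDegree - n + 1),
        ((t + n).choose n : R) * Q.coeff (t + n) * r ^ t := by
  simp only [taylor_coeff, eval_eq_sum_range' (Nat.lt_succ_of_le (natDegree_hasseDeriv_le Q n)),
    hasseDeriv_coeff]

end HasseDeriv

section Homogeneous

variable {R σ : Type*} [CommSemiring R] {F G : (MvPolynomial σ R)[X]} {d e : ℕ}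

lemma isHomogeneous_coeff_mul (hFd : F.natDegree ≤ d) (hGe : G.natDegree ≤ e)
    (hF : ∀ n, (F.coeff n).IsHomogeneous (d - n)) (hG : ∀ n, (G.coeff n).IsHomogeneous (e - n))
    (n : ℕ) : ((F * G).coeff n).IsHomogeneous (d + e - n) := by
  rw [coeff_mul]
  refine MvPolynomial.IsHomogeneous.sum _ _ _ fun ⟨i, j⟩ hij ↦ ?_
  rw [Finset.HasAntidiagonal.mem_antidiagonal] at hij
  dsimp only at hij ⊢
  by_cases hi : d < i
  · simp [coeff_eq_zero_of_natDegree_lt (hFd.trans_lt hi), MvPolynomial.isHomogeneous_zero]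
  by_cases hj : e < j
  · simp [coeff_eq_zero_of_natDegree_lt (hGe.trans_lt hj), MvPolynomial.isHomogeneous_zero]
  rw [show d + e - n = d - i + (e - j) by omega]
  exact (hF i).mul (hG j)

lemma isHomogeneous_coeff_taylor (hFd : F.natDegree ≤ d)
    (hF : ∀ n, (F.coeff n).IsHomogeneous (d - n)) {r : MvPolynomial σ R} (hr : r.IsHomogeneous 1)
    (n : ℕ) : ((taylor r F).coeff n).IsHomogeneous (d - n) := by
  rw [coeff_taylor_eq_sum_range]
  refine MvPolynomial.IsHomogeneous.sum _ _ _ fun t _ ↦ ?_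
  by_cases ht : d < t + n
  · simp [coeff_eq_zero_of_natDegree_lt (hFd.trans_lt ht), MvPolynomial.isHomogeneous_zero]
  rw [show d - n = 0 + (d - (t + n)) + 1 * t by omega, ← map_natCast MvPolynomial.C]
  exact ((MvPolynomial.isHomogeneous_C _ _).mul (hF _)).mul (hr.pow t)

end Homogeneous

section Homogenization

variable {R σ : Type*} [CommSemiring R]

/-- The homogenization `μ ^ d * P (x / μ)` of a polynomial `P` of degree `d`, where `μ` is the
variable `X i`. It is encoded as the polynomial in `x` whose roots are `μ` times those of `P`. -/
noncomputable def homogenization (i : σ) (P : R[X]) : (MvPolynomial σ R)[X] :=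
  (P.map MvPolynomial.C).scaleRoots (MvPolynomial.X i)

lemma natDegree_homogenization (i : σ) (P : R[X]) :
    (homogenization i P).natDegree = P.natDegree := by
  rw [homogenization, natDegree_scaleRoots,
    natDegree_map_eq_of_injective (MvPolynomial.C_injective σ R)]

lemma coeff_homogenization (i : σ) (P : R[X]) (n : ℕ) :
    (homogenization i P).coeff n =
      MvPolynomial.C (P.coeff n) * MvPolynomial.X i ^ (P.natDegree - n) := by
  rw [homogenization, coeff_scaleRoots, coeff_map,
    natDegree_map_eq_of_injective (MvPolynomial.C_injective σ R)]

lemma homogenization_pow (i : σ) {P : R[X]} (hP : P.Monic) (m : ℕ) :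
    homogenization i (P ^ m) = homogenization i P ^ m := by
  nontriviality R
  rw [homogenization, Polynomial.map_pow, pow_scaleRoots', homogenization]
  rw [(hP.map _).leadingCoeff, one_pow]
  exact one_ne_zero

lemma isHomogeneous_coeff_homogenization (i : σ) (P : R[X]) (n : ℕ) :
    ((homogenization i P).coeff n).IsHomogeneous (P.natDegree - n) := by
  rw [coeff_homogenization]
  exact MvPolynomial.isHomogeneous_C_mul_X_pow _ _ _

lemma degreeOf_coeff_homogenization_of_ne {i l : σ} (hli : l ≠ i) (P : R[X]) (n : ℕ) :
    ((homogenization i P).coeff n).degreeOf l = 0 := by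
  classical
  cases subsingleton_or_nontrivial R
  · rw [Subsingleton.elim ((homogenization i P).coeff n) 0, MvPolynomial.degreeOf_zero]
  refine Nat.le_zero.mp ?_
  calc ((homogenization i P).coeff n).degreeOf l
      ≤ (MvPolynomial.X i ^ (P.natDegree - n) : MvPolynomial σ R).degreeOf l := by
        rw [coeff_homogenization]
        exact MvPolynomial.degreeOf_C_mul_le _ _ _
    _ ≤ (P.natDegree - n) * (MvPolynomial.X i : MvPolynomial σ R).degreeOf l :=
        MvPolynomial.degreeOf_pow_le _ _ _
    _ = 0 := by rw [MvPolynomial.degreeOf_X, if_neg hli, mul_zero]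

lemma degreeOf_coeff_taylor_homogenization_le {j l : σ} (hlj : l ≠ j) (Q : R[X])
    {r : MvPolynomial σ R} (hr : r.degreeOf l ≤ 1) (n : ℕ) :
    ((taylor r (homogenization j Q)).coeff n).degreeOf l ≤ (hasseDeriv n Q).natDegree := by
  rw [coeff_taylor_eq_sum_range]
  refine (MvPolynomial.degreeOf_sum_le _ _ _).trans (Finset.sup_le fun t _ ↦ ?_)
  by_cases ht : (hasseDeriv n Q).natDegree < t
  · have hcoeff : ((t + n).choose n : R) * Q.coeff (t + n) = 0 := by
      rw [← hasseDeriv_coeff, coeff_eq_zero_of_natDegree_lt ht]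
    rw [coeff_homogenization, ← map_natCast MvPolynomial.C, ← mul_assoc, ← map_mul, hcoeff]
    simp
  · rw [← map_natCast MvPolynomial.C, mul_assoc]
    calc _ ≤ ((homogenization j Q).coeff (t + n) * r ^ t).degreeOf l :=
          MvPolynomial.degreeOf_C_mul_le _ _ _
      _ ≤ 0 + t * 1 := by
          refine (MvPolynomial.degreeOf_mul_le _ _ _).trans (add_le_add ?_ ?_)
          · rw [degreeOf_coeff_homogenization_of_ne hlj]
          · exact (MvPolynomial.degreeOf_pow_le _ _ _).trans (Nat.mul_le_mul_left t hr)
      _ ≤ (hasseDeriv n Q).natDegree := by omega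

lemma degreeOf_coeff_homogenization_mul_taylor_le {i j l : σ} (hli : l ≠ i) (hlj : l ≠ j)
    {p : ℕ} [CharP R p] (hp : p.Prime) {P Q : R[X]} {d : ℕ} (hd : 2 * d + 1 < 3 * p)
    (hPd : P.natDegree ≤ d) (hQd : Q.natDegree ≤ d)
    (hP : P.coeff (p - 1) = 0) (hQ : Q.coeff (p - 1) = 0)
    {r : MvPolynomial σ R} (hr : r.degreeOf l ≤ 1) :
    ((homogenization i P * taylor r (homogenization j Q)).coeff (2 * p - 1)).degreeOf l ≤
      d - (p + 1) := by
  rw [coeff_mul]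
  refine (MvPolynomial.degreeOf_sum_le _ _ _).trans (Finset.sup_le fun ⟨a, n⟩ han ↦ ?_)
  rw [Finset.HasAntidiagonal.mem_antidiagonal] at han
  dsimp only at han ⊢
  by_cases hPa : P.coeff a = 0
  · simp [coeff_homogenization, hPa]
  have had : a ≤ d := (le_natDegree_of_ne_zero hPa).trans hPd
  have hap : a ≠ p - 1 := by rintro rfl; exact hPa hP
  have hasse_le : (hasseDeriv n Q).natDegree ≤ d - (p + 1) := by
    obtain hnp | hpn := lt_or_ge n p
    · have := natDegree_hasseDeriv_le_of_charP hp hnp (by omega) hQ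
      omega
    · have := natDegree_hasseDeriv_le Q n
      omega
  calc _ ≤ 0 + (hasseDeriv n Q).natDegree := by
        refine (MvPolynomial.degreeOf_mul_le _ _ _).trans (add_le_add ?_ ?_)
        · rw [degreeOf_coeff_homogenization_of_ne hli]
        · exact degreeOf_coeff_taylor_homogenization_le hlj Q hr n
    _ ≤ d - (p + 1) := by rwa [zero_add]

end Homogenization

section DepressedCubic

variable {R σ : Type*} [CommSemiring R]

/-- The cubic `x³ + A x + B` defining the curve `y² = x³ + A x + B`. -/
noncomputable def depressedCubic (A B : R) : R[X] :=
  X ^ 3 + C A * X + C B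

lemma monic_depressedCubic (A B : R) : (depressedCubic A B).Monic := by
  rw [depressedCubic]
  monicity!

variable [Nontrivial R]

lemma natDegree_depressedCubic (A B : R) : (depressedCubic A B).natDegree = 3 := by
  rw [depressedCubic]
  compute_degree!

lemma natDegree_depressedCubic_pow (A B : R) (m : ℕ) :
    (depressedCubic A B ^ m).natDegree = 3 * m := by
  rw [(monic_depressedCubic A B).natDegree_pow, natDegree_depressedCubic, mul_comm]

lemma homogenization_depressedCubic (i : σ) (A B : R) :
    homogenization i (depressedCubic A B) =
      depressedCubic (MvPolynomial.C A * MvPolynomial.X i ^ 2)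
        (MvPolynomial.C B * MvPolynomial.X i ^ 3) := by
  ext1 n
  rw [coeff_homogenization, natDegree_depressedCubic, depressedCubic, depressedCubic]
  simp only [coeff_add, coeff_X_pow, coeff_C_mul, coeff_X, coeff_C]
  rcases n with _ | _ | _ | _ | n <;> simp

end DepressedCubic

section HoweGamma

variable {R : Type*} [CommRing R] [Nontrivial R] (A₁ B₁ A₂ B₂ : R)

lemma howeF_eq_homogenization_mul_taylor :
    howeF A₁ B₁ A₂ B₂ =
      homogenization 1 (depressedCubic A₁ B₁) *
        taylor (-MvPolynomial.X 0) (homogenization 2 (depressedCubic A₂ B₂)) := by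
  rw [homogenization_depressedCubic, homogenization_depressedCubic]
  simp only [howeF, depressedCubic, taylor_apply, add_comp, mul_comp, pow_comp, X_comp, C_comp,
    C_neg, ← sub_eq_add_neg]

lemma howeGamma_eq_coeff_homogenization_mul_taylor (p n : ℕ) :
    howeGamma A₁ B₁ A₂ B₂ p n =
      (homogenization (1 : Fin 3) (depressedCubic A₁ B₁ ^ ((p - 1) / 2)) *
        taylor (-MvPolynomial.X 0)
          (homogenization 2 (depressedCubic A₂ B₂ ^ ((p - 1) / 2)))).coeff n := by
  rw [howeGamma, howeF_eq_homogenization_mul_taylor, mul_pow, ← taylor_pow,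
    homogenization_pow _ (monic_depressedCubic _ _),
    homogenization_pow _ (monic_depressedCubic _ _)]

lemma isHomogeneous_howeGamma (p n : ℕ) :
    (howeGamma A₁ B₁ A₂ B₂ p n).IsHomogeneous (6 * ((p - 1) / 2) - n) := by
  have hX : (-MvPolynomial.X 0 : MvPolynomial (Fin 3) R).IsHomogeneous 1 :=
    (MvPolynomial.isHomogeneous_X R 0).neg
  have coeff_hom (i : Fin 3) (A B : R) (l : ℕ) :
      ((homogenization i (depressedCubic A B ^ ((p - 1) / 2))).coeff l).IsHomogeneous
        (3 * ((p - 1) / 2) - l) := by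
    rw [← natDegree_depressedCubic_pow A B]
    exact isHomogeneous_coeff_homogenization _ _ _
  have natDegree_le (i : Fin 3) (A B : R) :
      (homogenization i (depressedCubic A B ^ ((p - 1) / 2))).natDegree ≤ 3 * ((p - 1) / 2) := by
    rw [natDegree_homogenization, natDegree_depressedCubic_pow]
  rw [howeGamma_eq_coeff_homogenization_mul_taylor,
    show 6 * ((p - 1) / 2) = 3 * ((p - 1) / 2) + 3 * ((p - 1) / 2) by omega]
  exact isHomogeneous_coeff_mul (natDegree_le _ _ _)
    ((natDegree_taylor _ _).trans_le (natDegree_le _ _ _)) (coeff_hom _ _ _)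
    (isHomogeneous_coeff_taylor (natDegree_le _ _ _) (coeff_hom _ _ _) hX) n

end HoweGamma

/-- The bound `2 * deg + 5 ≤ p` is `deg ≤ (p - 5) / 2` without truncated subtraction. -/
theorem degree_b_le_general (p : ℕ) (hp : p.Prime) (hp3 : 3 < p)
    (R : Type*) [CommRing R] [CharP R p] (A₁ B₁ A₂ B₂ : R)
    (hss₁ : (depressedCubic A₁ B₁ ^ ((p - 1) / 2)).coeff (p - 1) = 0)
    (hss₂ : (depressedCubic A₂ B₂ ^ ((p - 1) / 2)).coeff (p - 1) = 0) :
    2 * MvPolynomial.degreeOf 0 (howeGamma A₁ B₁ A₂ B₂ p (2 * p - 1)) + 5 ≤ p ∧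
    MvPolynomial.degreeOf 1 (howeGamma A₁ B₁ A₂ B₂ p (2 * p - 1)) ≤ p - 2 ∧
    MvPolynomial.degreeOf 2 (howeGamma A₁ B₁ A₂ B₂ p (2 * p - 1)) ≤ p - 2 := by
  have : Nontrivial R := CharP.nontrivial_of_char_ne_one hp.ne_one
  have totalDegree_le : (howeGamma A₁ B₁ A₂ B₂ p (2 * p - 1)).totalDegree ≤ p - 2 :=
    (isHomogeneous_howeGamma A₁ B₁ A₂ B₂ p (2 * p - 1)).totalDegree_le.trans (by omega)
  refine ⟨?_, (MvPolynomial.degreeOf_le_totalDegree _ _).trans totalDegree_le,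
    (MvPolynomial.degreeOf_le_totalDegree _ _).trans totalDegree_le⟩
  have hX : (-MvPolynomial.X 0 : MvPolynomial (Fin 3) R).degreeOf 0 ≤ 1 := by
    rw [MvPolynomial.degreeOf_neg, MvPolynomial.degreeOf_X, if_pos rfl]
  have degreeOf_zero_le : MvPolynomial.degreeOf 0 (howeGamma A₁ B₁ A₂ B₂ p (2 * p - 1)) ≤
      3 * ((p - 1) / 2) - (p + 1) := by
    rw [howeGamma_eq_coeff_homogenization_mul_taylor]
    exact degreeOf_coeff_homogenization_mul_taylor_le zero_ne_one (by decide) hp (by omega)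
      (natDegree_depressedCubic_pow A₁ B₁ _).le (natDegree_depressedCubic_pow A₂ B₂ _).le
      hss₁ hss₂ hX
  obtain ⟨m, p_eq⟩ : Odd p := hp.odd_of_ne_two (by omega)
  omega

/-- **Lemma 2.3(2)**: if `E₁` and `E₂` are supersingular, then the degree of
`b = γ_{2p−1}` in `λ` is at most `(p−5)/2`, and its degrees in `μ` and `ν` are each
at most `p−2`. -/
theorem degree_b_le (p : ℕ) (hp : p.Prime) (hp3 : 3 < p)
    (k : Type*) [Field k] [CharP k p] (A₁ B₁ A₂ B₂ : k)
    (hΔ₁ : 4 * A₁ ^ 3 + 27 * B₁ ^ 2 ≠ 0) (hΔ₂ : 4 * A₂ ^ 3 + 27 * B₂ ^ 2 ≠ 0)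
    (hss₁ : ((Polynomial.X ^ 3 + Polynomial.C A₁ * Polynomial.X + Polynomial.C B₁ :
        Polynomial k) ^ ((p - 1) / 2)).coeff (p - 1) = 0)
    (hss₂ : ((Polynomial.X ^ 3 + Polynomial.C A₂ * Polynomial.X + Polynomial.C B₂ :
        Polynomial k) ^ ((p - 1) / 2)).coeff (p - 1) = 0) :
    MvPolynomial.degreeOf 0 (howeGamma A₁ B₁ A₂ B₂ p (2 * p - 1)) ≤ (p - 5) / 2 ∧
    MvPolynomial.degreeOf 1 (howeGamma A₁ B₁ A₂ B₂ p (2 * p - 1)) ≤ p - 2 ∧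
    MvPolynomial.degreeOf 2 (howeGamma A₁ B₁ A₂ B₂ p (2 * p - 1)) ≤ p - 2 := by
  have h := degree_b_le_general p hp hp3 k A₁ B₁ A₂ B₂ hss₁ hss₂
  exact ⟨by omega, h.2⟩
end

section
/- Lemma 2.3(3): Suppose that for i = 1, 2 the coefficient of x^{p−1} in (x³ + A_i x + B_i)^{(p−1)/2} ∈ k[x] is zero (i.e., E₁ and E₂ are supersingular). Then the degree of c = γ_{p−2} ∈ k[λ,μ,ν] in each of the variables λ, μ and ν is at most (3p−3)/2. -/
/-! The factor `f₁` is a cubic form in `x, μ` and `f₂` is a cubic form in `x, λ, ν`. No variable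
other than `x` occurs in both, so `f = f₁ f₂` has degree at most `3` in each of `λ, μ, ν`, and
`f ^ n` has degree at most `3n`. For `n = (p - 1) / 2` this bounds every `γ_i`. -/

section DegreeOf

variable {R σ : Type*} [CommSemiring R]

theorem degreeOf_X_le_one_s4 (j l : σ) :
    MvPolynomial.degreeOf j (MvPolynomial.X l : MvPolynomial σ R) ≤ 1 := by
  classical
  rcases subsingleton_or_nontrivial R with _ | _
  · simp [Subsingleton.elim (MvPolynomial.X l : MvPolynomial σ R) 0]
  · rw [MvPolynomial.degreeOf_X]
    split_ifs <;> simp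

theorem degreeOf_C_mul_pow_le {j : σ} {d : ℕ} {t : MvPolynomial σ R}
    (ht : MvPolynomial.degreeOf j t ≤ d) (a : R) (n : ℕ) :
    MvPolynomial.degreeOf j (MvPolynomial.C a * t ^ n) ≤ n * d :=
  calc MvPolynomial.degreeOf j (MvPolynomial.C a * t ^ n)
      ≤ MvPolynomial.degreeOf j (t ^ n) := MvPolynomial.degreeOf_C_mul_le _ _ _
    _ ≤ n * MvPolynomial.degreeOf j t := MvPolynomial.degreeOf_pow_le _ _ _
    _ ≤ n * d := Nat.mul_le_mul_left n ht

end DegreeOf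

section CoeffDegreeOf

variable {R σ : Type*} [CommSemiring R] {j : σ} {d e : ℕ} {P Q : Polynomial (MvPolynomial σ R)}

/-- The polynomial `P`, read as a polynomial in the variables `σ` and one more, has degree at most
`d` in the variable `j`; encoded as a bound on all its coefficients. -/
def CoeffDegreeOfLE (j : σ) (d : ℕ) (P : Polynomial (MvPolynomial σ R)) : Prop :=
  ∀ i, MvPolynomial.degreeOf j (P.coeff i) ≤ d

namespace CoeffDegreeOfLE

theorem mono (hP : CoeffDegreeOfLE j d P) (hde : d ≤ e) : CoeffDegreeOfLE j e P :=
  fun i => (hP i).trans hde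

theorem C {c : MvPolynomial σ R} (hc : MvPolynomial.degreeOf j c ≤ d) :
    CoeffDegreeOfLE j d (Polynomial.C c) := by
  intro i
  rw [Polynomial.coeff_C]
  split_ifs
  · exact hc
  · simp

theorem X : CoeffDegreeOfLE j d (Polynomial.X : Polynomial (MvPolynomial σ R)) := by
  intro i
  rw [Polynomial.coeff_X]
  split_ifs <;> simp

theorem add (hP : CoeffDegreeOfLE j d P) (hQ : CoeffDegreeOfLE j d Q) :
    CoeffDegreeOfLE j d (P + Q) := by
  intro i
  rw [Polynomial.coeff_add]
  exact (MvPolynomial.degreeOf_add_le _ _ _).trans (max_le (hP i) (hQ i))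

theorem sub {R : Type*} [CommRing R] {P Q : Polynomial (MvPolynomial σ R)}
    (hP : CoeffDegreeOfLE j d P) (hQ : CoeffDegreeOfLE j d Q) :
    CoeffDegreeOfLE j d (P - Q) := by
  intro i
  rw [Polynomial.coeff_sub]
  exact (MvPolynomial.degreeOf_sub_le _ _ _).trans (max_le (hP i) (hQ i))

theorem mul (hP : CoeffDegreeOfLE j d P) (hQ : CoeffDegreeOfLE j e Q) :
    CoeffDegreeOfLE j (d + e) (P * Q) := by
  intro i
  rw [Polynomial.coeff_mul]
  refine (MvPolynomial.degreeOf_sum_le _ _ _).trans (Finset.sup_le fun x _ => ?_)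
  exact (MvPolynomial.degreeOf_mul_le _ _ _).trans (add_le_add (hP x.1) (hQ x.2))

theorem pow (hP : CoeffDegreeOfLE j d P) (n : ℕ) : CoeffDegreeOfLE j (n * d) (P ^ n) := by
  induction n with
  | zero =>
    rw [pow_zero, ← Polynomial.C_1]
    exact C (by simp)
  | succ n ih =>
    rw [pow_succ, Nat.succ_mul]
    exact ih.mul hP

end CoeffDegreeOfLE

end CoeffDegreeOf

section HomogeneousCubic

variable {R σ : Type*} [CommSemiring R]

/-- The form `L³ + A t² L + B t³`, the homogenization of the Weierstrass cubic `x³ + A x + B`.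
Both factors of `howeF` are of this shape: `f₁` with `(L, t) = (x, μ)` and `f₂` with
`(L, t) = (x - λ, ν)`. -/
noncomputable def homogeneousCubic (A B : R) (t : MvPolynomial σ R)
    (L : Polynomial (MvPolynomial σ R)) : Polynomial (MvPolynomial σ R) :=
  L ^ 3 + Polynomial.C (MvPolynomial.C A * t ^ 2) * L + Polynomial.C (MvPolynomial.C B * t ^ 3)

theorem CoeffDegreeOfLE.homogeneousCubic {j : σ} {d : ℕ} {t : MvPolynomial σ R}
    {L : Polynomial (MvPolynomial σ R)} (ht : MvPolynomial.degreeOf j t ≤ d)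
    (hL : CoeffDegreeOfLE j d L) (A B : R) :
    CoeffDegreeOfLE j (3 * d) (homogeneousCubic A B t L) := by
  have linear_term : CoeffDegreeOfLE j (2 * d + d)
      (Polynomial.C (MvPolynomial.C A * t ^ 2) * L) :=
    (CoeffDegreeOfLE.C (degreeOf_C_mul_pow_le ht A 2)).mul hL
  exact ((hL.pow 3).add (linear_term.mono (by lia))).add (.C (degreeOf_C_mul_pow_le ht B 3))

end HomogeneousCubic

section HoweF

variable {R : Type*} [CommRing R]

theorem howeF_eq_homogeneousCubic_mul (A₁ B₁ A₂ B₂ : R) :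
    howeF A₁ B₁ A₂ B₂ =
      homogeneousCubic A₁ B₁ (MvPolynomial.X 1) Polynomial.X *
        homogeneousCubic A₂ B₂ (MvPolynomial.X 2)
          (Polynomial.X - Polynomial.C (MvPolynomial.X 0)) :=
  rfl

theorem coeffDegreeOfLE_howeF (A₁ B₁ A₂ B₂ : R) (j : Fin 3) :
    CoeffDegreeOfLE j 3 (howeF A₁ B₁ A₂ B₂) := by
  rw [howeF_eq_homogeneousCubic_mul]
  by_cases hj : j = 1
  · have degree_f₁ := CoeffDegreeOfLE.homogeneousCubic (degreeOf_X_le_one_s4 j 1) .X A₁ B₁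
    have degree_X {l : Fin 3} (hl : l ≠ 1) :
        MvPolynomial.degreeOf j (MvPolynomial.X l : MvPolynomial (Fin 3) R) ≤ 0 :=
      (MvPolynomial.degreeOf_X_of_ne (hj.trans_ne hl.symm)).le
    have degree_f₂ := CoeffDegreeOfLE.homogeneousCubic (degree_X (l := 2) (by decide))
      (.sub .X (.C (degree_X (l := 0) (by decide)))) A₂ B₂
    exact degree_f₁.mul degree_f₂
  · have degree_f₁ := CoeffDegreeOfLE.homogeneousCubic
      (MvPolynomial.degreeOf_X_of_ne hj).le .X A₁ B₁
    have degree_f₂ := CoeffDegreeOfLE.homogeneousCubic (degreeOf_X_le_one_s4 j 2)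
      (.sub .X (.C (degreeOf_X_le_one_s4 j 0))) A₂ B₂
    exact degree_f₁.mul degree_f₂

theorem degree_c_le_general (A₁ B₁ A₂ B₂ : R) (n i : ℕ) (j : Fin 3) :
    MvPolynomial.degreeOf j ((howeF A₁ B₁ A₂ B₂ ^ n).coeff i) ≤ n * 3 :=
  (coeffDegreeOfLE_howeF A₁ B₁ A₂ B₂ j).pow n i

end HoweF

/-- **Lemma 2.3(3)**: if `E₁` and `E₂` are supersingular, then the degree of
`c = γ_{p−2}` in each of the variables `λ, μ, ν` is at most `(3p−3)/2`. -/
theorem degree_c_le (p : ℕ) (hp : p.Prime) (hp3 : 3 < p)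
    (k : Type*) [Field k] [CharP k p] (A₁ B₁ A₂ B₂ : k)
    (hΔ₁ : 4 * A₁ ^ 3 + 27 * B₁ ^ 2 ≠ 0) (hΔ₂ : 4 * A₂ ^ 3 + 27 * B₂ ^ 2 ≠ 0)
    (hss₁ : ((Polynomial.X ^ 3 + Polynomial.C A₁ * Polynomial.X + Polynomial.C B₁ :
        Polynomial k) ^ ((p - 1) / 2)).coeff (p - 1) = 0)
    (hss₂ : ((Polynomial.X ^ 3 + Polynomial.C A₂ * Polynomial.X + Polynomial.C B₂ :
        Polynomial k) ^ ((p - 1) / 2)).coeff (p - 1) = 0) :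
    ∀ j : Fin 3,
      MvPolynomial.degreeOf j (howeGamma A₁ B₁ A₂ B₂ p (p - 2)) ≤ (3 * p - 3) / 2 := by
  exact fun j => (degree_c_le_general A₁ B₁ A₂ B₂ ((p - 1) / 2) (p - 2) j).trans (by lia)
end

section
/- Lemma 2.3(4): Suppose that for i = 1, 2 the coefficient of x^{p−1} in (x³ + A_i x + B_i)^{(p−1)/2} ∈ k[x] is zero (i.e., E₁ and E₂ are supersingular). Then the degree of d = γ_{2p−2} ∈ k[λ,μ,ν] in the variable λ is at most (p−3)/2, and its degrees in the variables μ and ν are each at most p−1. -/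
/-!
Up to sign, the monomials of `γ_N` are `λ^(i+j-N) μ^(3n-i) ν^(3n-j)` with `n = (p-1)/2`, and such a
monomial carries the coefficient of `x^i` in `g₁^n`, that of `x^j` in `g₂^n`, and the binomial
coefficient `j.choose (N-i)`, where `g₁, g₂` are the two cubics. For `N = 4n = 2p-2` the bounds
`i, j ≤ 3n` and `N ≤ i + j` give the degrees in `μ` and `ν`. For `λ`, supersingularity excludes
`i = 2n` and `j = 2n`, while for `i, j > 2n` the subtraction of `4n - i` from `j` in base `p` has a
borrow, so that the binomial coefficient vanishes modulo `p`. What remains has `i + j ≤ 5n - 1`.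
-/

theorem dvd_choose_of_mod_lt_mod {p n m : ℕ} (hp : p.Prime) (h : n % p < m % p) :
    p ∣ n.choose m := by
  have : Fact p.Prime := ⟨hp⟩
  have lucas : n.choose m ≡ (n % p).choose (m % p) * (n / p).choose (m / p) [MOD p] :=
    Choose.choose_modEq_choose_mod_mul_choose_div_nat
  rw [Nat.choose_eq_zero_of_lt h, zero_mul] at lucas
  exact Nat.modEq_zero_iff_dvd.mp lucas

section

open Polynomial Finset

section CommSemiring

variable {R : Type*} [CommSemiring R]

theorem coeff_taylor_eq_sum_range_s5 (f : R[X]) (r : R) (m : ℕ) :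
    (taylor r f).coeff m =
      ∑ j ∈ range (f.natDegree + 1), f.coeff j * j.choose m * r ^ (j - m) := by
  rw [taylor_coeff, hasseDeriv_apply, sum_over_range _ (by simp), eval_finsetSum]
  simp only [eval_monomial, mul_comm (Nat.cast _)]

theorem coeff_scaleRoots_map_C {σ : Type*} (G : R[X]) (t : MvPolynomial σ R) (i : ℕ) :
    ((G.map MvPolynomial.C).scaleRoots t).coeff i =
      MvPolynomial.C (G.coeff i) * t ^ (G.natDegree - i) := by
  rw [coeff_scaleRoots, coeff_map, natDegree_map_eq_of_injective (MvPolynomial.C_injective σ R)]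

theorem monic_depressed_cubic (A B : R) : (X ^ 3 + C A * X + C B).Monic := by
  monicity!

theorem natDegree_depressed_cubic [Nontrivial R] (A B : R) :
    (X ^ 3 + C A * X + C B).natDegree = 3 := by
  compute_degree!

theorem scaleRoots_map_C_depressed_cubic {σ : Type*} (A B : R) (t : MvPolynomial σ R) :
    ((X ^ 3 + C A * X + C B).map MvPolynomial.C).scaleRoots t =
      X ^ 3 + C (MvPolynomial.C A * t ^ 2) * X + C (MvPolynomial.C B * t ^ 3) := by
  nontriviality R
  ext1 i
  rw [coeff_scaleRoots_map_C, natDegree_depressed_cubic]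
  simp only [coeff_add, coeff_C_mul, coeff_X_pow, coeff_X, coeff_C]
  rcases i with _ | _ | _ | _ | i <;> simp

end CommSemiring

variable {k : Type*} [CommRing k]

/-- The product `μ^d₁ G₁(x/μ) · ν^d₂ G₂((x-λ)/ν)` in `k[λ,μ,ν][x]`, where `dᵢ = deg Gᵢ` and
`λ = X 0`, `μ = X 1`, `ν = X 2`. For `Gᵢ = x³ + Aᵢ x + Bᵢ` this is `howeF`. -/
noncomputable def scaledShiftedProduct (G₁ G₂ : k[X]) : (MvPolynomial (Fin 3) k)[X] :=
  (G₁.map MvPolynomial.C).scaleRoots (MvPolynomial.X 1) *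
    taylor (-MvPolynomial.X 0) ((G₂.map MvPolynomial.C).scaleRoots (MvPolynomial.X 2))

theorem scaledShiftedProduct_pow {g₁ g₂ : k[X]} (h₁ : g₁.Monic) (h₂ : g₂.Monic) (n : ℕ) :
    scaledShiftedProduct g₁ g₂ ^ n = scaledShiftedProduct (g₁ ^ n) (g₂ ^ n) := by
  nontriviality k
  have scaleRoots_pow {g : k[X]} (hg : g.Monic) (t : MvPolynomial (Fin 3) k) :
      ((g ^ n).map MvPolynomial.C).scaleRoots t = (g.map MvPolynomial.C).scaleRoots t ^ n := by
    rw [Polynomial.map_pow, pow_scaleRoots' _ _ _ (by simp [(hg.map MvPolynomial.C).leadingCoeff])]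
  rw [scaledShiftedProduct, scaledShiftedProduct, scaleRoots_pow h₁, scaleRoots_pow h₂, taylor_pow,
    mul_pow]

theorem coeff_scaledShiftedProduct (G₁ G₂ : k[X]) (N : ℕ) :
    (scaledShiftedProduct G₁ G₂).coeff N =
      ∑ x ∈ antidiagonal N, ∑ j ∈ range (G₂.natDegree + 1),
        MvPolynomial.monomial
          (Finsupp.single 0 (j - x.2) + Finsupp.single 1 (G₁.natDegree - x.1) +
            Finsupp.single 2 (G₂.natDegree - j))
          ((-1) ^ (j - x.2) * (G₁.coeff x.1 * G₂.coeff j * j.choose x.2)) := by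
  rw [scaledShiftedProduct, coeff_mul]
  refine sum_congr rfl fun x _ ↦ ?_
  rw [coeff_scaleRoots_map_C, coeff_taylor_eq_sum_range_s5, natDegree_scaleRoots,
    natDegree_map_eq_of_injective (MvPolynomial.C_injective _ k), mul_sum]
  refine sum_congr rfl fun j _ ↦ ?_
  rw [coeff_scaleRoots_map_C, neg_pow]
  simp only [MvPolynomial.monomial_add_single, ← MvPolynomial.C_mul_X_pow_eq_monomial, map_mul,
    map_pow, map_neg, map_one, map_natCast]
  ring

theorem exists_of_mem_support_coeff_scaledShiftedProduct {G₁ G₂ : k[X]} {N : ℕ} {s : Fin 3 →₀ ℕ}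
    (hs : s ∈ ((scaledShiftedProduct G₁ G₂).coeff N).support) :
    ∃ i m j, i + m = N ∧ G₁.coeff i ≠ 0 ∧ G₂.coeff j ≠ 0 ∧ (j.choose m : k) ≠ 0 ∧
      s 0 = j - m ∧ s 1 = G₁.natDegree - i ∧ s 2 = G₂.natDegree - j := by
  rw [coeff_scaledShiftedProduct, MvPolynomial.mem_support_iff, MvPolynomial.coeff_sum] at hs
  obtain ⟨⟨i, m⟩, him, hs⟩ := exists_ne_zero_of_sum_ne_zero hs
  rw [MvPolynomial.coeff_sum] at hs
  obtain ⟨j, -, hs⟩ := exists_ne_zero_of_sum_ne_zero hs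
  rw [MvPolynomial.coeff_monomial] at hs
  obtain ⟨rfl, hcoeff⟩ := ite_ne_right_iff.mp hs
  have hprod := right_ne_zero_of_mul hcoeff
  exact ⟨i, m, j, mem_antidiagonal.mp him, left_ne_zero_of_mul (left_ne_zero_of_mul hprod),
    right_ne_zero_of_mul (left_ne_zero_of_mul hprod), right_ne_zero_of_mul hprod,
    by simp, by simp, by simp⟩

theorem le_of_cast_choose_ne_zero {R : Type*} [AddMonoidWithOne R] {n m : ℕ}
    (h : (n.choose m : R) ≠ 0) : m ≤ n := by
  contrapose! h
  rw [Nat.choose_eq_zero_of_lt h, Nat.cast_zero]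

theorem degreeOf_one_coeff_scaledShiftedProduct_le (G₁ G₂ : k[X]) (N : ℕ) :
    ((scaledShiftedProduct G₁ G₂).coeff N).degreeOf 1 ≤ G₁.natDegree + G₂.natDegree - N := by
  refine MvPolynomial.degreeOf_le_iff.mpr fun s hs ↦ ?_
  obtain ⟨i, m, j, him, -, hj, hchoose, -, hs₁, -⟩ :=
    exists_of_mem_support_coeff_scaledShiftedProduct hs
  have := le_natDegree_of_ne_zero hj
  have := le_of_cast_choose_ne_zero hchoose
  omega

theorem degreeOf_two_coeff_scaledShiftedProduct_le (G₁ G₂ : k[X]) (N : ℕ) :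
    ((scaledShiftedProduct G₁ G₂).coeff N).degreeOf 2 ≤ G₁.natDegree + G₂.natDegree - N := by
  refine MvPolynomial.degreeOf_le_iff.mpr fun s hs ↦ ?_
  obtain ⟨i, m, j, him, hi, -, hchoose, -, -, hs₂⟩ :=
    exists_of_mem_support_coeff_scaledShiftedProduct hs
  have := le_natDegree_of_ne_zero hi
  have := le_of_cast_choose_ne_zero hchoose
  omega

theorem degreeOf_zero_coeff_scaledShiftedProduct_le {n : ℕ} (hp : (2 * n + 1).Prime)
    [CharP k (2 * n + 1)] {G₁ G₂ : k[X]} (hdeg₁ : G₁.natDegree ≤ 3 * n)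
    (hdeg₂ : G₂.natDegree ≤ 3 * n) (h₁ : G₁.coeff (2 * n) = 0) (h₂ : G₂.coeff (2 * n) = 0) :
    ((scaledShiftedProduct G₁ G₂).coeff (4 * n)).degreeOf 0 ≤ n - 1 := by
  refine MvPolynomial.degreeOf_le_iff.mpr fun s hs ↦ ?_
  obtain ⟨i, m, j, him, hi, hj, hchoose, hs₀, -, -⟩ :=
    exists_of_mem_support_coeff_scaledShiftedProduct hs
  have hi_le : i ≤ 3 * n := (le_natDegree_of_ne_zero hi).trans hdeg₁
  have hj_le : j ≤ 3 * n := (le_natDegree_of_ne_zero hj).trans hdeg₂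
  have hi_ne : i ≠ 2 * n := by rintro rfl; exact hi h₁
  have hj_ne : j ≠ 2 * n := by rintro rfl; exact hj h₂
  have not_both_large : ¬(2 * n < i ∧ 2 * n < j) := by
    rintro ⟨hi_lt, hj_lt⟩
    refine hchoose ((CharP.cast_eq_zero_iff k (2 * n + 1) _).mpr (dvd_choose_of_mod_lt_mod hp ?_))
    rw [Nat.mod_eq_sub_mod hj_lt, Nat.mod_eq_of_lt (by omega), Nat.mod_eq_of_lt (by omega)]
    omega
  omega

theorem howeF_eq_scaledShiftedProduct (A₁ B₁ A₂ B₂ : k) :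
    howeF A₁ B₁ A₂ B₂ =
      scaledShiftedProduct (X ^ 3 + C A₁ * X + C B₁) (X ^ 3 + C A₂ * X + C B₂) := by
  rw [howeF, scaledShiftedProduct, scaleRoots_map_C_depressed_cubic,
    scaleRoots_map_C_depressed_cubic]
  simp [taylor_apply, sub_eq_add_neg]

theorem degree_d_le_general {p : ℕ} (hp : p.Prime) (hp2 : p ≠ 2) [CharP k p] {g₁ g₂ : k[X]}
    (hmonic₁ : g₁.Monic) (hmonic₂ : g₂.Monic) (hdeg₁ : g₁.natDegree = 3) (hdeg₂ : g₂.natDegree = 3)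
    (hss₁ : (g₁ ^ ((p - 1) / 2)).coeff (p - 1) = 0)
    (hss₂ : (g₂ ^ ((p - 1) / 2)).coeff (p - 1) = 0) :
    let d := (scaledShiftedProduct g₁ g₂ ^ ((p - 1) / 2)).coeff (2 * p - 2)
    d.degreeOf 0 ≤ (p - 3) / 2 ∧ d.degreeOf 1 ≤ p - 1 ∧ d.degreeOf 2 ≤ p - 1 := by
  obtain ⟨n, rfl⟩ := hp.odd_of_ne_two hp2
  have hexp : (2 * n + 1 - 1) / 2 = n := by omega
  have hindex : 2 * (2 * n + 1) - 2 = 4 * n := by omega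
  have hdeg_pow₁ : (g₁ ^ n).natDegree = 3 * n := by rw [hmonic₁.natDegree_pow, hdeg₁, mul_comm]
  have hdeg_pow₂ : (g₂ ^ n).natDegree = 3 * n := by rw [hmonic₂.natDegree_pow, hdeg₂, mul_comm]
  rw [hexp, Nat.add_sub_cancel] at hss₁ hss₂
  rw [hexp, hindex, scaledShiftedProduct_pow hmonic₁ hmonic₂]
  refine ⟨?_, ?_, ?_⟩
  · have := degreeOf_zero_coeff_scaledShiftedProduct_le hp hdeg_pow₁.le hdeg_pow₂.le hss₁ hss₂
    omega
  · have := degreeOf_one_coeff_scaledShiftedProduct_le (g₁ ^ n) (g₂ ^ n) (4 * n)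
    omega
  · have := degreeOf_two_coeff_scaledShiftedProduct_le (g₁ ^ n) (g₂ ^ n) (4 * n)
    omega

end

/-- **Lemma 2.3(4)**: if `E₁` and `E₂` are supersingular, then the degree of
`d = γ_{2p−2}` in `λ` is at most `(p−3)/2`, and its degrees in `μ` and `ν` are each
at most `p−1`. -/
theorem degree_d_le (p : ℕ) (hp : p.Prime) (hp3 : 3 < p)
    (k : Type*) [Field k] [CharP k p] (A₁ B₁ A₂ B₂ : k)
    (hΔ₁ : 4 * A₁ ^ 3 + 27 * B₁ ^ 2 ≠ 0) (hΔ₂ : 4 * A₂ ^ 3 + 27 * B₂ ^ 2 ≠ 0)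
    (hss₁ : ((Polynomial.X ^ 3 + Polynomial.C A₁ * Polynomial.X + Polynomial.C B₁ :
        Polynomial k) ^ ((p - 1) / 2)).coeff (p - 1) = 0)
    (hss₂ : ((Polynomial.X ^ 3 + Polynomial.C A₂ * Polynomial.X + Polynomial.C B₂ :
        Polynomial k) ^ ((p - 1) / 2)).coeff (p - 1) = 0) :
    MvPolynomial.degreeOf 0 (howeGamma A₁ B₁ A₂ B₂ p (2 * p - 2)) ≤ (p - 3) / 2 ∧
    MvPolynomial.degreeOf 1 (howeGamma A₁ B₁ A₂ B₂ p (2 * p - 2)) ≤ p - 1 ∧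
    MvPolynomial.degreeOf 2 (howeGamma A₁ B₁ A₂ B₂ p (2 * p - 2)) ≤ p - 1 := by
  rw [howeGamma, howeF_eq_scaledShiftedProduct]
  exact degree_d_le_general hp (by omega) (monic_depressed_cubic _ _) (monic_depressed_cubic _ _)
    (natDegree_depressed_cubic _ _) (natDegree_depressed_cubic _ _) hss₁ hss₂
end

section
/- Lemma 3.1 (in the coordinate form established in its proof): Let k be a field and let T₁, T₂, T₃, T₄ be linear forms in k[x₁, x₂, x₃, x₄] forming a basis of the space of linear forms. Let Q be a homogeneous quadratic form whose coefficients of T₃² and of T₄², when Q is written in the coordinates T₁, T₂, T₃, T₄, are both nonzero. Let R₁ be a polynomial lying in the subalgebra k[T₁, T₂, T₃] whose degree in T₃ is at most 2, let R₂ be a polynomial lying in k[T₁, T₂, T₄] whose degree in T₄ is at most 2, and let L be a linear form such that R₂ − R₁ = L·Q. Then L lies in the k-span of T₁ and T₂. (In the setting of the paper: if R^{(i)} = P − L^{(i)}Q are the cubics defining the elliptic quotients associated to an admissible pair (U^{(1)}, U^{(2)}) of elements of EQ(H) for a Howe curve H = V(Q,P), then the linear form ȳ := L^{(1)} − L^{(2)}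 belongs to U^{(1)} ∩ U^{(2)}.) -/
/-!
Linearly independent linear forms `Tᵢ` are algebraically independent, so a polynomial identity
between them is an identity of polynomials in independent variables, and coefficients may be
compared. Writing `L = ∑ lᵢ Tᵢ`, the coefficient of `Tₛ ^ (d + 1)` in `L * Q` is `lₛ` times that of
`Tₛ ^ d` in `Q`. If `L * Q` has degree at most `d` in `Tₛ` while `Q` has a nonzero `Tₛ ^ d` term,
then `lₛ = 0`.
-/

section

open MvPolynomial

theorem aeval_linearMap_X_eq_of_isHomogeneous_one {σ R A : Type*} [CommSemiring R]
    [CommSemiring A] [Algebra R A] (g : MvPolynomial σ R →ₗ[R] A) {p : MvPolynomial σ R}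
    (hp : p.IsHomogeneous 1) : aeval (fun j => g (X j)) p = g p := by
  have hp' : p ∈ Submodule.span R (Set.range X) := by
    rwa [← homogeneousSubmodule_one_eq_span_X, mem_homogeneousSubmodule]
  refine LinearMap.eqOn_span (f := (aeval fun j => g (X j)).toLinearMap) ?_ hp'
  rintro _ ⟨j, rfl⟩
  exact aeval_X _ j

theorem algebraicIndependent_of_linearIndependent_of_isHomogeneous_one {ι σ k : Type*}
    [Field k] {T : ι → MvPolynomial σ k} (hThom : ∀ i, (T i).IsHomogeneous 1)
    (hTind : LinearIndependent k T) : AlgebraicIndependent k T := by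
  obtain ⟨coords, hcoords⟩ :=
    (Finsupp.linearCombination k T).exists_leftInverse_of_injective (LinearMap.ker_eq_bot.mpr hTind)
  let g : MvPolynomial σ k →ₗ[k] MvPolynomial ι k := Finsupp.linearCombination k X ∘ₗ coords
  have hgT (i : ι) : g (T i) = X i := by
    have hi : coords (T i) = Finsupp.single i 1 := by
      simpa using LinearMap.congr_fun hcoords (Finsupp.single i 1)
    simp [g, hi]
  have hinv : (aeval fun j => g (X j)).comp (aeval T) = AlgHom.id k (MvPolynomial ι k) := by
    ext i : 1
    rw [AlgHom.comp_apply, aeval_X, aeval_linearMap_X_eq_of_isHomogeneous_one g (hThom i), hgT,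
      AlgHom.id_apply]
  exact Function.LeftInverse.injective (g := aeval fun j => g (X j)) (AlgHom.congr_fun hinv)

theorem span_range_eq_homogeneousSubmodule_one {σ k : Type*} [Finite σ] [Field k]
    {T : σ → MvPolynomial σ k} (hThom : ∀ i, (T i).IsHomogeneous 1)
    (hTind : LinearIndependent k T) :
    Submodule.span k (Set.range T) = homogeneousSubmodule σ k 1 := by
  have := Fintype.ofFinite σ
  rw [homogeneousSubmodule_one_eq_span_X]
  have : FiniteDimensional k (Submodule.span k (Set.range (X : σ → MvPolynomial σ k))) :=
    .span_of_finite k (Set.finite_range X)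
  refine Submodule.eq_of_le_of_finrank_eq ?_ ?_
  · rw [← homogeneousSubmodule_one_eq_span_X, Submodule.span_le]
    exact Set.range_subset_iff.mpr hThom
  · rw [finrank_span_eq_card hTind, finrank_span_eq_card (linearIndependent_X σ k)]

section Coefficients

variable {σ R : Type*} [CommSemiring R]

theorem coeff_single_succ_X_mul [DecidableEq σ] (i s : σ) (d : ℕ) (q : MvPolynomial σ R) :
    coeff (Finsupp.single s (d + 1)) (X i * q) =
      if i = s then coeff (Finsupp.single s d) q else 0 := by
  rw [coeff_X_mul']
  rcases eq_or_ne i s with rfl | his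
  · simp
  · simp [his]

theorem coeff_single_succ_linearCombination_X_mul (l : σ →₀ R) (s : σ) (d : ℕ)
    (q : MvPolynomial σ R) :
    coeff (Finsupp.single s (d + 1)) (Finsupp.linearCombination R X l * q) =
      l s * coeff (Finsupp.single s d) q := by
  classical
  simp only [Finsupp.linearCombination_apply, Finsupp.sum, Finset.sum_mul, coeff_sum, coeff_smul,
    smul_mul_assoc, coeff_single_succ_X_mul, smul_eq_mul, mul_ite, mul_zero, Finset.sum_ite_eq']
  simp +contextual

theorem coeff_single_two_sum_C_mul_X_mul_X [Fintype σ] (c : σ → σ → R) (s : σ) :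
    coeff (Finsupp.single s 2) (∑ i, ∑ j, C (c i j) * X i * X j) = c s s := by
  classical
  simp [mul_assoc, coeff_sum, coeff_C_mul, coeff_single_succ_X_mul _ s 1, coeff_X,
    Finsupp.single_left_inj]

theorem degreeOf_rename_le_of_injective {τ : Type*} {e : τ → σ} (he : Function.Injective e)
    {p : MvPolynomial τ R} {s : σ} {n : ℕ} (hp : ∀ i, e i = s → degreeOf i p ≤ n) :
    degreeOf s (rename e p) ≤ n := by
  by_cases hs : s ∈ (rename e p).vars
  · obtain ⟨i, -, rfl⟩ := mem_vars_rename e p hs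
    exact (degreeOf_rename_of_injective he i).trans_le (hp i rfl)
  · rw [mem_vars_iff_degreeOf_ne_zero, not_not] at hs
    exact hs.trans_le (Nat.zero_le n)

end Coefficients

theorem mem_span_image_compl_of_aeval_eq_mul_aeval {ι R A : Type*} [CommRing R]
    [NoZeroDivisors R] [CommRing A] [Algebra R A] {x : ι → A} (hx : AlgebraicIndependent R x)
    {S : Set ι} {d : ℕ} {q r : MvPolynomial ι R} (hq : ∀ s ∈ S, coeff (Finsupp.single s d) q ≠ 0)
    (hr : ∀ s ∈ S, degreeOf s r ≤ d) {L : A} (hL : L ∈ Submodule.span R (Set.range x))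
    (hLq : aeval x r = L * aeval x q) : L ∈ Submodule.span R (x '' Sᶜ) := by
  obtain ⟨l, rfl⟩ := Finsupp.mem_span_range_iff_exists_finsupp.mp hL
  have hrq : r = Finsupp.linearCombination R X l * q := by
    apply hx
    simpa [Finsupp.linearCombination_apply, Finsupp.sum] using hLq
  refine (Finsupp.mem_span_image_iff_linearCombination R).mpr ⟨l, ?_, rfl⟩
  refine (Finsupp.mem_supported' R l).mpr fun s hs => ?_
  have hsS : s ∈ S := not_not.mp hs
  have hcoeff : coeff (Finsupp.single s (d + 1)) r = 0 :=
    notMem_support_iff.mp <| notMem_support_of_degreeOf_lt s <| by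
      simpa using Nat.lt_succ_of_le (hr s hsS)
  rw [hrq, coeff_single_succ_linearCombination_X_mul] at hcoeff
  exact (mul_eq_zero.mp hcoeff).resolve_right (hq s hsS)

theorem linear_form_mem_span_general {σ k : Type*} [Finite σ] [Field k]
    {T : σ → MvPolynomial σ k} (hThom : ∀ i, (T i).IsHomogeneous 1)
    (hTind : LinearIndependent k T) {S : Set σ} {d : ℕ} {q r : MvPolynomial σ k}
    (hq : ∀ s ∈ S, coeff (Finsupp.single s d) q ≠ 0) (hr : ∀ s ∈ S, degreeOf s r ≤ d)
    {L : MvPolynomial σ k} (hL : L.IsHomogeneous 1) (hLq : aeval T r = L * aeval T q) :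
    L ∈ Submodule.span k (T '' Sᶜ) := by
  refine mem_span_image_compl_of_aeval_eq_mul_aeval
    (algebraicIndependent_of_linearIndependent_of_isHomogeneous_one hThom hTind) hq hr ?_ hLq
  rwa [span_range_eq_homogeneousSubmodule_one hThom hTind, mem_homogeneousSubmodule]

end

/-- **Lemma 3.1** (coordinate form): let `T₁, T₂, T₃, T₄` be linear forms of
`k[x₁,x₂,x₃,x₄]` forming a basis of the space of linear forms (indexed here by
`T 0, T 1, T 2, T 3`).  Suppose the quadratic form `Q = ∑ᵢⱼ cᵢⱼ TᵢTⱼ` has nonzero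
coefficients of `T₃²` and `T₄²` (i.e. `c 2 2 ≠ 0` and `c 3 3 ≠ 0`).  If
`R₁ ∈ k[T₁,T₂,T₃]` has degree at most `2` in `T₃`, `R₂ ∈ k[T₁,T₂,T₄]` has degree at
most `2` in `T₄`, and `L` is a linear form with `R₂ − R₁ = L·Q`, then `L` lies in the
`k`-span of `T₁` and `T₂`. -/
theorem linear_form_mem_span (k : Type*) [Field k]
    (T : Fin 4 → MvPolynomial (Fin 4) k)
    (hThom : ∀ i, (T i).IsHomogeneous 1)
    (hTind : LinearIndependent k T)
    (Q : MvPolynomial (Fin 4) k) (c : Fin 4 → Fin 4 → k)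
    (hQ : Q = ∑ i : Fin 4, ∑ j : Fin 4, MvPolynomial.C (c i j) * T i * T j)
    (hc33 : c 2 2 ≠ 0) (hc44 : c 3 3 ≠ 0)
    (r₁ r₂ : MvPolynomial (Fin 3) k)
    (hr₁deg : MvPolynomial.degreeOf 2 r₁ ≤ 2)
    (hr₂deg : MvPolynomial.degreeOf 2 r₂ ≤ 2)
    (R₁ R₂ : MvPolynomial (Fin 4) k)
    (hR₁ : R₁ = MvPolynomial.aeval (fun i : Fin 3 => T (![0, 1, 2] i)) r₁)
    (hR₂ : R₂ = MvPolynomial.aeval (fun i : Fin 3 => T (![0, 1, 3] i)) r₂)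
    (L : MvPolynomial (Fin 4) k) (hL : L.IsHomogeneous 1)
    (hLQ : R₂ - R₁ = L * Q) :
    L ∈ Submodule.span k {T 0, T 1} := by
  have hr : ∀ s ∈ ({2, 3} : Set (Fin 4)), MvPolynomial.degreeOf s
      (MvPolynomial.rename ![0, 1, 3] r₂ - MvPolynomial.rename ![0, 1, 2] r₁) ≤ 2 := by
    have hlast₁ : ∀ i, ![0, 1, 2] i = (2 : Fin 4) ∨ ![0, 1, 2] i = (3 : Fin 4) → i = 2 := by decide
    have hlast₂ : ∀ i, ![0, 1, 3] i = (2 : Fin 4) ∨ ![0, 1, 3] i = (3 : Fin 4) → i = 2 := by decide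
    refine fun s hs => (MvPolynomial.degreeOf_sub_le s _ _).trans (max_le ?_ ?_)
    · exact degreeOf_rename_le_of_injective (by decide) fun i hi => by rwa [hlast₂ i (hi ▸ hs)]
    · exact degreeOf_rename_le_of_injective (by decide) fun i hi => by rwa [hlast₁ i (hi ▸ hs)]
  have hcompl : ({2, 3} : Set (Fin 4))ᶜ = {0, 1} := by ext i; fin_cases i <;> simp
  rw [← Set.image_pair, ← hcompl]
  refine linear_form_mem_span_general hThom hTind
    (q := ∑ i, ∑ j, MvPolynomial.C (c i j) * MvPolynomial.X i * MvPolynomial.X j) ?_ hr hL ?_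
  · simp [coeff_single_two_sum_C_mul_X_mul_X, hc33, hc44]
  · simpa only [map_sub, map_sum, map_mul, MvPolynomial.aeval_rename, Function.comp_def,
      MvPolynomial.aeval_X, MvPolynomial.aeval_C, MvPolynomial.algebraMap_eq, hQ, hR₁, hR₂]
      using hLQ
end
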